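/- Let H be a Hamiltonian pattern of size k (i.e. a graph on [k] which, after relabelling vertices, contains the Hamiltonian cycle with edges (1,2),(2,3),…,(k−1,k),(k,1)), let ⋆ ∈ {ind, sub}, and assume k < 1 + 1/(3−τ). Then the vector with α_i = 0 for all i and β_{ij} = −1/d for all i < j is an optimal solution of the corresponding optimization problem, and there exists a constant I_G^⋆(H) ∈ (0,∞), depending on the parameters of the GIRG, such that N^⋆(H)/n converges in probability to I_G^⋆(H) as n → ∞. -/

import Mathlib

open MeasureTheory Filter Finset

noncomputable section

instance : Fact ((0:ℝ) < 1) := ⟨one_pos⟩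

/-- The `d`-dimensional torus `ℝ^d/ℤ^d`, with the sup of coordinatewise circle distances. -/
abbrev Torus (d : ℕ) := Fin d → AddCircle (1 : ℝ)

/-- Sample space of the GIRG on `n` vertices: weights, positions, and iid uniform
`[0,1]` coins deciding the presence of each potential edge. -/
abbrev GirgΩ (d n : ℕ) := (Fin n → ℝ) × (Fin n → Torus d) × (Sym2 (Fin n) → ℝ)

/-- The law of the randomness of the GIRG: iid weights with law `μW`, iid uniform positions
on the torus, iid uniform coins. -/
def girgMeasure (μW : Measure ℝ) (d n : ℕ) : Measure (GirgΩ d n) :=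
  (Measure.pi fun _ : Fin n => μW).prod
    ((Measure.pi fun _ : Fin n => (volume : Measure (Torus d))).prod
      (Measure.pi fun _ : Sym2 (Fin n) => volume.restrict (Set.Icc (0:ℝ) 1)))

/-- mean `μ = E[W]` of the weight distribution -/
def wMean (μW : Measure ℝ) : ℝ := ∫ x, x ∂μW

/-- Power-law tail assumption: `W ≥ 1` a.s. and `P(W > x) = c x^{1-τ} (1+o(1))` as `x → ∞`. -/
def WeightTail (τ c : ℝ) (μW : Measure ℝ) : Prop :=
  0 < c ∧ μW (Set.Iio 1) = 0 ∧
    Tendsto (fun x : ℝ => (μW (Set.Ioi x)).toReal / (c * x ^ (1 - τ))) atTop (nhds 1)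

/-- GIRG connection probability `min(1, (w_u w_v / (n μ ‖x_u - x_v‖^d))^γ)`. -/
def connProb (γ μbar : ℝ) (d n : ℕ) (w : Fin n → ℝ) (x : Fin n → Torus d)
    (u v : Fin n) : ℝ :=
  min 1 ((w u * w v / ((n : ℝ) * μbar * dist (x u) (x v) ^ d)) ^ γ)

/-- `u` and `v` are joined by an edge of the GIRG in outcome `ω`. -/
def girgEdge (γ μbar : ℝ) (d n : ℕ) (ω : GirgΩ d n) (u v : Fin n) : Prop :=
  u ≠ v ∧ ω.2.2 s(u, v) ≤ connProb γ μbar d n ω.1 ω.2.1 u v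

/-- the window `[ε t, t/ε]` -/
def windowIcc (ε t : ℝ) : Set ℝ := Set.Icc (ε * t) (t / ε)

/-- The set `M_ε^{(α,β)}` of ordered `k`-tuples of distinct vertices with prescribed
weights and inter-distances. -/
def Mset {k : ℕ} (ε : ℝ) (α : Fin k → ℝ) (β : Fin k → Fin k → ℝ) (d n : ℕ)
    (w : Fin n → ℝ) (x : Fin n → Torus d) : Set (Fin k → Fin n) :=
  {v | Function.Injective v ∧
    (∀ i, w (v i) ∈ windowIcc ε ((n : ℝ) ^ (α i))) ∧
    (∀ i j : Fin k, i < j → dist (x (v i)) (x (v j)) ∈ windowIcc ε ((n : ℝ) ^ (β i j)))}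

/-- `N^{sub}(H; M_ε^{(α,β)})` -/
def nSubM {k : ℕ} (H : SimpleGraph (Fin k)) (γ μbar ε : ℝ) (α : Fin k → ℝ)
    (β : Fin k → Fin k → ℝ) (d n : ℕ) (ω : GirgΩ d n) : ℕ :=
  Set.ncard {v : Fin k → Fin n | v ∈ Mset ε α β d n ω.1 ω.2.1 ∧
    ∀ i j : Fin k, H.Adj i j → girgEdge γ μbar d n ω (v i) (v j)}

/-- `N^{ind}(H; M_ε^{(α,β)})` -/
def nIndM {k : ℕ} (H : SimpleGraph (Fin k)) (γ μbar ε : ℝ) (α : Fin k → ℝ)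
    (β : Fin k → Fin k → ℝ) (d n : ℕ) (ω : GirgΩ d n) : ℕ :=
  Set.ncard {v : Fin k → Fin n | v ∈ Mset ε α β d n ω.1 ω.2.1 ∧
    ∀ i j : Fin k, i ≠ j → (H.Adj i j ↔ girgEdge γ μbar d n ω (v i) (v j))}

/-- `N^{sub}(H)` -/
def nSubTotal {k : ℕ} (H : SimpleGraph (Fin k)) (γ μbar : ℝ) (d n : ℕ)
    (ω : GirgΩ d n) : ℕ :=
  Set.ncard {v : Fin k → Fin n | Function.Injective v ∧
    ∀ i j : Fin k, H.Adj i j → girgEdge γ μbar d n ω (v i) (v j)}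

/-- `N^{ind}(H)` -/
def nIndTotal {k : ℕ} (H : SimpleGraph (Fin k)) (γ μbar : ℝ) (d n : ℕ)
    (ω : GirgΩ d n) : ℕ :=
  Set.ncard {v : Fin k → Fin n | Function.Injective v ∧
    ∀ i j : Fin k, i ≠ j → (H.Adj i j ↔ girgEdge γ μbar d n ω (v i) (v j))}

/-- `β` read as a symmetric matrix (only entries with `i < j` are meaningful). -/
def bsym {k : ℕ} (β : Fin k → Fin k → ℝ) (i j : Fin k) : ℝ := if i < j then β i j else β j i

/-- The feasible region `F`. -/
def Feasible (τ : ℝ) (d : ℕ) {k : ℕ} (α : Fin k → ℝ) (β : Fin k → Fin k → ℝ) : Prop :=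
  (∀ i, α i ∈ Set.Icc (0 : ℝ) (1 / (τ - 1))) ∧
  (∀ i j : Fin k, i < j → β i j ∈ Set.Icc (-(1 / (d : ℝ))) 0) ∧
  (∀ i j s : Fin k, i < j → s ≠ i → s ≠ j → β i j ≤ max (bsym β i s) (bsym β j s))

/-- `min_{i<j} β_{ij}` (with value `0 = sInf ∅` for the first vertex `j`,
which does not contribute). -/
def minBeta {k : ℕ} (β : Fin k → Fin k → ℝ) (j : Fin k) : ℝ :=
  sInf {x : ℝ | ∃ i, i < j ∧ x = β i j}

open scoped Classical in
/-- The exponent `f_H(α,β)`. -/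
def fExp (τ γ : ℝ) (d : ℕ) {k : ℕ} (H : SimpleGraph (Fin k))
    (α : Fin k → ℝ) (β : Fin k → Fin k → ℝ) : ℝ :=
  (k : ℝ) + (1 - τ) * ∑ i, α i + (d : ℝ) * ∑ j, minBeta β j +
    γ * ∑ p ∈ Finset.univ.filter (fun p : Fin k × Fin k => p.1 < p.2 ∧ H.Adj p.1 p.2),
        min (α p.1 + α p.2 - (d : ℝ) * β p.1 p.2 - 1) 0

/-- Extra constraints for the induced optimization problem:
`α_i + α_j ≤ 1 + d β_{ij}` for all non-edges. -/
def IndConstr (d : ℕ) {k : ℕ} (H : SimpleGraph (Fin k)) (α : Fin k → ℝ)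
    (β : Fin k → Fin k → ℝ) : Prop :=
  ∀ i j : Fin k, i < j → ¬H.Adj i j → α i + α j ≤ 1 + (d : ℝ) * β i j

/-- `(α,β)` is an optimal solution of the general optimization problem. -/
def IsOptimalSub (τ γ : ℝ) (d : ℕ) {k : ℕ} (H : SimpleGraph (Fin k))
    (α : Fin k → ℝ) (β : Fin k → Fin k → ℝ) : Prop :=
  Feasible τ d α β ∧
    ∀ α' β', Feasible τ d α' β' → fExp τ γ d H α' β' ≤ fExp τ γ d H α β

/-- `(α,β)` is an optimal solution of the induced optimization problem. -/
def IsOptimalInd (τ γ : ℝ) (d : ℕ) {k : ℕ} (H : SimpleGraph (Fin k))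
    (α : Fin k → ℝ) (β : Fin k → Fin k → ℝ) : Prop :=
  Feasible τ d α β ∧ IndConstr d H α β ∧
    ∀ α' β', Feasible τ d α' β' → IndConstr d H α' β' →
      fExp τ γ d H α' β' ≤ fExp τ γ d H α β

/-- the two kinds of subgraph counts -/
inductive StarKind | ind | sub

/-- `N^⋆(H; M_ε^{(α,β)})` -/
def starNM (s : StarKind) {k : ℕ} (H : SimpleGraph (Fin k)) (γ μbar ε : ℝ) (α : Fin k → ℝ)
    (β : Fin k → Fin k → ℝ) (d n : ℕ) (ω : GirgΩ d n) : ℕ :=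
  match s with
  | .sub => nSubM H γ μbar ε α β d n ω
  | .ind => nIndM H γ μbar ε α β d n ω

/-- `N^⋆(H)` -/
def starNTotal (s : StarKind) {k : ℕ} (H : SimpleGraph (Fin k)) (γ μbar : ℝ) (d n : ℕ)
    (ω : GirgΩ d n) : ℕ :=
  match s with
  | .sub => nSubTotal H γ μbar d n ω
  | .ind => nIndTotal H γ μbar d n ω

/-- optimality in the optimization problem corresponding to `⋆` -/
def starIsOptimal (s : StarKind) (τ γ : ℝ) (d : ℕ) {k : ℕ} (H : SimpleGraph (Fin k))
    (α : Fin k → ℝ) (β : Fin k → Fin k → ℝ) : Prop :=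
  match s with
  | .sub => IsOptimalSub τ γ d H α β
  | .ind => IsOptimalInd τ γ d H α β

/-- the optimal value `f_H^*` of the optimization problem corresponding to `⋆` -/
def starOptVal (s : StarKind) (τ γ : ℝ) (d : ℕ) {k : ℕ} (H : SimpleGraph (Fin k)) : ℝ :=
  match s with
  | .sub => sSup {x | ∃ α β, Feasible τ d α β ∧ x = fExp τ γ d H α β}
  | .ind => sSup {x | ∃ α β, Feasible τ d α β ∧ IndConstr d H α β ∧ x = fExp τ γ d H α β}

/-- `(α,β)` is the unique optimal solution (in the `α`-variables and the
`β`-variables with `i < j`). -/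
def UniquelyOptimal (s : StarKind) (τ γ : ℝ) (d : ℕ) {k : ℕ} (H : SimpleGraph (Fin k))
    (α : Fin k → ℝ) (β : Fin k → Fin k → ℝ) : Prop :=
  starIsOptimal s τ γ d H α β ∧
    ∀ α' β', starIsOptimal s τ γ d H α' β' →
      α' = α ∧ ∀ i j : Fin k, i < j → β' i j = β i j


/-- `H` is a Hamiltonian pattern: after relabelling the vertices it contains the
Hamiltonian cycle `(1,2),(2,3),…,(k-1,k),(k,1)`. -/
def IsHamiltonianPattern {k : ℕ} [NeZero k] (H : SimpleGraph (Fin k)) : Prop :=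
  ∃ σ : Equiv.Perm (Fin k), ∀ i : Fin k, H.Adj (σ i) (σ (i + 1))

def pathW {V : Type*} (b : V → V → ℝ) : List V → ℝ
  | [] => 0
  | [_] => 0
  | a :: c :: l => b a c + pathW b (c :: l)

theorem pathW_append {V : Type*} (b : V → V → ℝ) (a : V) (l2 : List V) :
    ∀ l1 : List V, pathW b (l1 ++ a :: l2) = pathW b (l1 ++ [a]) + pathW b (a :: l2)
  | [] => by simp [pathW]
  | [x] => by simp [pathW]
  | x :: y :: l => by
      have := pathW_append b a l2 (y :: l)
      simp only [List.cons_append, pathW] at this ⊢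
      rw [this]; ring

theorem pathW_greedy {V : Type*} [LinearOrder V] (b : V → V → ℝ) (M : V → ℝ)
    (hsym : ∀ i j, b i j = b j i) (hM0 : ∀ j, M j ≤ 0) (hM : ∀ i j, i < j → M j ≤ b i j)
    (hu : ∀ i j s, i ≠ j → s ≠ i → s ≠ j → b i j ≤ max (b i s) (b j s)) :
    ∀ (N : ℕ) (l : List V), l.length = N → l.Nodup → l ≠ [] → (l.map M).sum ≤ pathW b l := by
  intro N
  induction N with
  | zero => intro l hl _ hne; exact absurd (List.length_eq_zero_iff.mp hl) hne
  | succ N ih =>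
    intro l hl hnd hne
    obtain ⟨v, hv, hmax⟩ : ∃ v ∈ l, ∀ x ∈ l, x ≤ v := by
      have hn : l.toFinset.Nonempty := by
        simpa [List.toFinset_nonempty_iff] using hne
      obtain ⟨v, hv, h⟩ := l.toFinset.exists_max_image id hn
      exact ⟨v, by simpa using hv, fun x hx => h x (by simpa using hx)⟩
    obtain ⟨l1, l2, rfl⟩ := List.append_of_mem hv
    have hlt : ∀ x, x ∈ l1 ∨ x ∈ l2 → x < v := by
      intro x hx
      refine lt_of_le_of_ne (hmax x (by simp; tauto)) ?_
      rintro rfl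
      have h1 := hnd
      rw [List.nodup_append] at h1
      rcases hx with hx | hx
      · exact h1.2.2 x hx x (by simp) rfl
      · exact (List.nodup_cons.mp h1.2.1).1 hx
    have hnd' : (l1 ++ l2).Nodup := by
      refine hnd.sublist ?_
      exact List.Sublist.append (List.Sublist.refl _) (List.sublist_cons_self _ _)
    have hlen : (l1 ++ l2).length = N := by simp at hl ⊢; omega
    rcases l1.eq_nil_or_concat with rfl | ⟨l1', a, rfl⟩
    · rcases l2 with _ | ⟨c, l2'⟩
      · simpa [pathW] using hM0 v
      · have := ih (c :: l2') (by simpa using hlen) (by simpa using hnd') (by simp)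
        have h1 := hM c v (hlt c (by simp))
        simp only [List.nil_append, pathW, List.map_cons, List.sum_cons] at this ⊢
        rw [hsym v c]; linarith
    · rcases l2 with _ | ⟨c, l2'⟩
      · have := ih (l1' ++ [a]) (by simpa using hlen) (by simpa using hnd') (by simp)
        have h1 := hM a v (hlt a (by simp))
        simp only [List.concat_eq_append, List.append_assoc, List.singleton_append] at this ⊢
        rw [pathW_append b a [v] l1']
        simp only [pathW, List.map_append, List.map_cons, List.sum_cons, List.sum_append, List.map_nil, List.sum_nil] at this ⊢
        linarith
      · have := ih (l1' ++ a :: c :: l2') (by simpa using hlen) (by simpa using hnd') (by simp)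
        have h1 := hM a v (hlt a (by simp))
        have h2 := hM c v (hlt c (by simp))
        have hac : a ≠ c := by
          rintro rfl
          simp [List.nodup_append] at hnd'
        have h3 := hu a c v hac (hlt a (by simp)).ne' (hlt c (by simp)).ne'
        simp only [List.concat_eq_append, List.append_assoc, List.singleton_append] at this ⊢
        rw [pathW_append b a _ l1'] at this ⊢
        simp only [pathW, List.map_append, List.map_cons, List.sum_cons, List.sum_append, List.map_nil, List.sum_nil] at this ⊢
        rw [hsym v c]
        rcases max_cases (b a v) (b c v) with h | h <;> linarith

theorem pathW_ofFn {V : Type*} (b : V → V → ℝ) : ∀ (m : ℕ) (ρ : Fin (m+1) → V),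
    pathW b (List.ofFn ρ) = ∑ i : Fin m, b (ρ i.castSucc) (ρ i.succ)
  | 0, ρ => by simp [pathW]
  | m+1, ρ => by
      have h := pathW_ofFn b m (fun i => ρ i.succ)
      rw [List.ofFn_succ, List.ofFn_succ, pathW, Fin.sum_univ_succ]
      rw [List.ofFn_succ] at h
      rw [h]; simp

theorem ham_path {m : ℕ} {H : SimpleGraph (Fin (m+1))} {σ : Equiv.Perm (Fin (m+1))}
    (hσ : ∀ i, H.Adj (σ i) (σ (i+1))) (j : Fin (m+1)) (i : Fin m) :
    H.Adj (σ (i.castSucc + j)) (σ (i.succ + j)) := by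
  have := hσ (i.castSucc + j)
  rwa [add_right_comm, Fin.coeSucc_eq_succ] at this

theorem path_edge_inj {m : ℕ} (ρ : Fin (m+1) → Fin (m+1)) (hρ : Function.Injective ρ) :
    Function.Injective (fun i : Fin m => s(ρ i.castSucc, ρ i.succ)) := by
  intro i j h
  simp only [Sym2.eq_iff] at h
  rcases h with ⟨h, _⟩ | ⟨h1, h2⟩
  · exact Fin.castSucc_injective _ (hρ h)
  · have h1 := congrArg Fin.val (hρ h1)
    have h2 := congrArg Fin.val (hρ h2)
    simp at h1 h2; omega

theorem bsym_comm {k : ℕ} (β : Fin k → Fin k → ℝ) (i j : Fin k) : bsym β i j = bsym β j i := by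
  unfold bsym
  rcases lt_trichotomy i j with h | rfl | h
  · simp [h, h.not_gt]
  · rfl
  · simp [h, h.not_gt]

theorem minBeta_le {k : ℕ} (β : Fin k → Fin k → ℝ) (i j : Fin k) (h : i < j) :
    minBeta β j ≤ β i j := by
  unfold minBeta
  apply csInf_le
  · refine (Set.Finite.subset (Set.finite_range (fun i => β i j)) ?_).bddBelow
    rintro x ⟨i, _, rfl⟩; exact ⟨i, rfl⟩
  · exact ⟨i, h, rfl⟩

open scoped Classical in
theorem fExp_le_path {m d : ℕ} {τ γ : ℝ} (hγ : 1 < γ) (H : SimpleGraph (Fin (m+1)))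
    (α : Fin (m+1) → ℝ) (β : Fin (m+1) → Fin (m+1) → ℝ) (hF : Feasible τ d α β)
    (ρ : Fin (m+1) → Fin (m+1)) (hρ : Function.Injective ρ)
    (hadj : ∀ i : Fin m, H.Adj (ρ i.castSucc) (ρ i.succ)) :
    fExp τ γ d H α β ≤ 1 + (1 - τ) * ∑ i, α i
      + ∑ i : Fin m, (α (ρ i.castSucc) + α (ρ i.succ)) := by
  obtain ⟨hα, hβ, hult⟩ := hF
  have hmin0 : ∀ j, minBeta β j ≤ 0 := by
    intro j
    by_cases h : ∃ i, i < j
    · obtain ⟨i, hi⟩ := h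
      exact (minBeta_le β i j hi).trans (hβ i j hi).2
    · unfold minBeta
      have : {x : ℝ | ∃ i, i < j ∧ x = β i j} = ∅ := by
        ext x; simp; intro i hi; exact absurd ⟨i, hi⟩ h
      rw [this, Real.sInf_empty]
  have h1 : ∑ j, minBeta β j ≤ ∑ i : Fin m, bsym β (ρ i.castSucc) (ρ i.succ) := by
    have := pathW_greedy (bsym β) (minBeta β) (bsym_comm β) hmin0
      (fun i j h => by simpa [bsym, h] using minBeta_le β i j h)
      (by
        intro i j s hij hsi hsj
        rcases lt_or_gt_of_ne hij with h | h
        · have := hult i j s h hsi hsj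
          simpa [bsym, h] using this
        · have := hult j i s h hsj hsi
          rw [bsym_comm β i j, max_comm]
          have e : bsym β j i = β j i := by simp [bsym, h]
          rw [e]; exact this)
      _ (List.ofFn ρ) rfl (List.nodup_ofFn.mpr hρ) (by simp)
    rw [pathW_ofFn, List.map_ofFn, List.sum_ofFn] at this
    refine le_trans (le_of_eq ?_) this
    exact ((Equiv.ofBijective ρ (Finite.injective_iff_bijective.mp hρ)).sum_comp (minBeta β)).symm
  set φ : Sym2 (Fin (m+1)) → ℝ := Sym2.lift ⟨fun i j => min (α i + α j - d * bsym β i j - 1) 0,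
    fun i j => by simp only [bsym_comm β i j, add_comm (α i)]⟩ with hφ
  have h2 : ∑ p ∈ Finset.univ.filter (fun p : Fin (m+1) × Fin (m+1) => p.1 < p.2 ∧ H.Adj p.1 p.2),
        min (α p.1 + α p.2 - (d : ℝ) * β p.1 p.2 - 1) 0 ≤
      ∑ i : Fin m, min (α (ρ i.castSucc) + α (ρ i.succ) - d * bsym β (ρ i.castSucc) (ρ i.succ) - 1) 0 := by
    have e1 : ∑ p ∈ Finset.univ.filter (fun p : Fin (m+1) × Fin (m+1) => p.1 < p.2 ∧ H.Adj p.1 p.2),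
        min (α p.1 + α p.2 - (d : ℝ) * β p.1 p.2 - 1) 0 =
        ∑ e ∈ (Finset.univ.filter (fun p : Fin (m+1) × Fin (m+1) => p.1 < p.2 ∧ H.Adj p.1 p.2)).image
          (fun p => s(p.1, p.2)), φ e := by
      rw [Finset.sum_image]
      · apply Finset.sum_congr rfl
        rintro ⟨a, b⟩ hp
        simp at hp
        simp [hφ, bsym, hp.1]
      · rintro ⟨a, b⟩ hp ⟨a', b'⟩ hp' h
        simp at hp hp' h
        rcases h with h | ⟨rfl, rfl⟩
        · simp [h]
        · exact absurd hp.1 hp'.1.not_gt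
    have e2 : ∑ i : Fin m, min (α (ρ i.castSucc) + α (ρ i.succ) - d * bsym β (ρ i.castSucc) (ρ i.succ) - 1) 0
        = ∑ e ∈ (Finset.univ : Finset (Fin m)).image (fun i : Fin m => s(ρ i.castSucc, ρ i.succ)), φ e := by
      rw [Finset.sum_image (fun i _ j _ h => path_edge_inj ρ hρ h)]
      rfl
    rw [e1, e2]
    apply Finset.sum_le_sum_of_subset_of_nonpos'
    · intro e he
      simp only [Finset.mem_image, Finset.mem_univ, true_and, Finset.mem_filter, Prod.exists] at he ⊢
      obtain ⟨i, rfl⟩ := he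
      rcases lt_or_gt_of_ne (hadj i).ne with h | h
      · exact ⟨_, _, ⟨h, hadj i⟩, rfl⟩
      · exact ⟨_, _, ⟨h, (hadj i).symm⟩, Sym2.eq_swap⟩
    · intro e _ _
      induction e with
      | _ a b => simp [hφ]
  have h3 : γ * ∑ p ∈ Finset.univ.filter (fun p : Fin (m+1) × Fin (m+1) => p.1 < p.2 ∧ H.Adj p.1 p.2),
        min (α p.1 + α p.2 - (d : ℝ) * β p.1 p.2 - 1) 0 ≤
      ∑ i : Fin m, (α (ρ i.castSucc) + α (ρ i.succ) - d * bsym β (ρ i.castSucc) (ρ i.succ) - 1) := by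
    refine (mul_le_mul_of_nonneg_left h2 (by linarith)).trans ?_
    have hn : ∑ i : Fin m, min (α (ρ i.castSucc) + α (ρ i.succ) - d * bsym β (ρ i.castSucc) (ρ i.succ) - 1) 0 ≤ 0 :=
      Finset.sum_nonpos (fun i _ => min_le_right _ _)
    refine le_trans (?_ : _ ≤ ∑ i : Fin m, min (α (ρ i.castSucc) + α (ρ i.succ) - d * bsym β (ρ i.castSucc) (ρ i.succ) - 1) 0) (Finset.sum_le_sum (fun i _ => min_le_left _ _))
    nlinarith
  unfold fExp
  have h4 := mul_le_mul_of_nonneg_left h1 (Nat.cast_nonneg (α := ℝ) d)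
  simp only [Finset.sum_sub_distrib, ← Finset.mul_sum, Finset.sum_const, Finset.card_univ, Fintype.card_fin, nsmul_eq_mul, mul_one] at h3
  push_cast
  linarith

theorem fExp_base {m d : ℕ} (hd : 1 ≤ d) {τ γ : ℝ} (H : SimpleGraph (Fin (m+1))) :
    fExp τ γ d H (fun _ => 0) (fun _ _ => -(1 / (d : ℝ))) = 1 := by
  have hd0 : (d:ℝ) ≠ 0 := by positivity
  unfold fExp
  have h1 : ∀ j : Fin m, minBeta (fun _ _ : Fin (m+1) => -(1 / (d : ℝ))) j.succ = -(1/(d:ℝ)) := by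
    intro j
    unfold minBeta
    have : {x : ℝ | ∃ i, i < j.succ ∧ x = -(1 / (d:ℝ))} = {-(1/(d:ℝ))} := by
      ext x
      simp only [Set.mem_ofPred_eq, Set.mem_singleton_iff]
      constructor
      · rintro ⟨_, _, h⟩; exact h
      · intro h; exact ⟨0, Fin.succ_pos j, h⟩
    rw [this, csInf_singleton]
  have h0 : minBeta (fun _ _ : Fin (m+1) => -(1 / (d : ℝ))) 0 = 0 := by
    unfold minBeta
    simp
  rw [Fin.sum_univ_succ (fun j => minBeta _ j), h0]
  simp only [h1]
  simp [hd0]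
  field_simp
  ring

theorem ham_opt {m d : ℕ} (hd : 1 ≤ d) {τ γ : ℝ} (hτ : τ ∈ Set.Ioo (2:ℝ) 3) (hγ : 1 < γ)
    (H : SimpleGraph (Fin (m+1))) (σ : Equiv.Perm (Fin (m+1)))
    (hσ : ∀ i, H.Adj (σ i) (σ (i+1))) (hk : ((m:ℝ)+1) * (3 - τ) ≤ 2) (s : StarKind) :
    starIsOptimal s τ γ d H (fun _ => 0) (fun _ _ => -(1 / (d : ℝ))) := by
  have hd0 : (0:ℝ) < d := by positivity
  have hfeas : Feasible τ d (fun _ : Fin (m+1) => 0) (fun _ _ => -(1 / (d : ℝ))) := by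
    refine ⟨fun i => ⟨le_rfl, ?_⟩, fun i j _ => ⟨le_rfl, ?_⟩, fun i j s _ _ _ => ?_⟩
    · have : 0 < τ - 1 := by linarith [hτ.1]
      positivity
    · have : 0 < 1 / (d:ℝ) := by positivity
      linarith
    · simp [bsym]
  have hopt : ∀ α' β', Feasible τ d α' β' → fExp τ γ d H α' β' ≤ fExp τ γ d H (fun _ => 0) (fun _ _ => -(1 / (d : ℝ))) := by
    intro α β hF
    rw [fExp_base hd]
    have h1 : ∀ j : Fin (m+1), fExp τ γ d H α β ≤ 1 + (1 - τ) * ∑ i, α i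
      + ∑ i : Fin m, (α (σ (i.castSucc + j)) + α (σ (i.succ + j))) := fun j =>
      fExp_le_path hγ H α β hF (fun i => σ (i + j))
        (fun a b h => add_right_cancel (σ.injective h)) (ham_path hσ j)
    have h2 := Finset.sum_le_sum (s := Finset.univ) (fun j _ => h1 j)
    have hs : ∀ i : Fin (m+1), ∑ j, α (σ (i + j)) = ∑ i, α i := by
      intro i
      exact ((Equiv.addLeft i).trans σ).sum_comp α
    rw [Finset.sum_add_distrib, Finset.sum_comm] at h2
    simp only [Finset.sum_add_distrib, hs, Finset.sum_const, Finset.card_univ, Fintype.card_fin, nsmul_eq_mul] at h2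
    have hα : 0 ≤ ∑ i, α i := Finset.sum_nonneg (fun i _ => (hF.1 i).1)
    push_cast at h2
    have hm : (0:ℝ) < (m:ℝ)+1 := by positivity
    have h3 : ((m:ℝ)+1) * fExp τ γ d H α β ≤ ((m:ℝ)+1) * 1 := by nlinarith
    exact le_of_mul_le_mul_left h3 hm
  cases s with
  | sub => exact ⟨hfeas, hopt⟩
  | ind =>
    refine ⟨hfeas, ?_, fun α β h _ => hopt α β h⟩
    intro i j _ _
    simp [hd0.ne']

instance circ_prob : IsProbabilityMeasure (volume : Measure (AddCircle (1:ℝ))) :=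
  ⟨by rw [AddCircle.measure_univ]; simp⟩

instance torus_prob (d : ℕ) : IsProbabilityMeasure (volume : Measure (Torus d)) := by
  rw [volume_pi]; infer_instance

abbrev coinM : Measure ℝ := volume.restrict (Set.Icc (0:ℝ) 1)

instance coin_prob : IsProbabilityMeasure (volume.restrict (Set.Icc (0:ℝ) 1)) :=
  ⟨by simp⟩

instance girg_prob (μW : Measure ℝ) [IsProbabilityMeasure μW] (d n : ℕ) :
    IsProbabilityMeasure (girgMeasure μW d n) := by
  unfold girgMeasure; infer_instance

theorem mp_pi_inj {ι κ X : Type*} [Fintype ι] [Fintype κ] [MeasurableSpace X] (μ : Measure X)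
    [IsProbabilityMeasure μ] (e : κ → ι) (he : Function.Injective e) :
    MeasurePreserving (fun f : ι → X => fun j => f (e j)) (Measure.pi fun _ => μ)
      (Measure.pi fun _ => μ) := by
  refine ⟨by fun_prop, ?_⟩
  have h := (ProbabilityTheory.iIndepFun_pi (ι := ι) (μ := fun _ : ι => μ) (X := fun _ : ι => (id : X → X))
    (fun _ => aemeasurable_id)).precomp he
  have h2 := h.map_fun_eq_pi_map (fun i => by
    apply Measurable.aemeasurable; simp only [id]; fun_prop)
  simp only [id] at h2
  rw [h2]
  congr
  ext i : 1
  exact (measurePreserving_eval (fun _ : ι => μ) (e i)).map_eq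

theorem mp_pi_pair {ι κ κ' X : Type*} [Fintype ι] [Fintype κ] [Fintype κ'] [MeasurableSpace X]
    (μ : Measure X) [IsProbabilityMeasure μ] (u : κ → ι) (v : κ' → ι)
    (hu : Function.Injective u) (hv : Function.Injective v) (huv : ∀ i j, u i ≠ v j) :
    MeasurePreserving (fun f : ι → X => ((fun j => f (u j)), (fun j => f (v j))))
      (Measure.pi fun _ => μ) ((Measure.pi fun _ => μ).prod (Measure.pi fun _ => μ)) := by
  have h1 := mp_pi_inj μ (Sum.elim u v) (hu.sumElim hv huv)
  have h2 := measurePreserving_sumPiEquivProdPi (fun _ : κ ⊕ κ' => μ)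
  exact h2.comp h1

theorem mp_prod4 {A B C D : Type*} [MeasurableSpace A] [MeasurableSpace B] [MeasurableSpace C]
    [MeasurableSpace D] (a : Measure A) (b : Measure B) (c : Measure C) (e : Measure D)
    [IsProbabilityMeasure a] [IsProbabilityMeasure b] [IsProbabilityMeasure c] [IsProbabilityMeasure e] :
    MeasurePreserving (fun p : (A × B) × (C × D) => ((p.1.1, p.2.1), (p.1.2, p.2.2)))
      ((a.prod b).prod (c.prod e)) ((a.prod c).prod (b.prod e)) := by
  have h1 := measurePreserving_prodAssoc a b (c.prod e)
  have h2 := (measurePreserving_prodAssoc b c e).symm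
  have h3 := (Measure.measurePreserving_swap (μ := b) (ν := c))
  have h4 := measurePreserving_prodAssoc c b e
  have h5 := (measurePreserving_prodAssoc a c (b.prod e)).symm
  have hin := h4.comp ((h3.prod (MeasurePreserving.id e)).comp h2)
  exact h5.comp (((MeasurePreserving.id a).prod hin).comp h1)

/-- restriction of the randomness to a tuple of vertices -/
def restr {d n k : ℕ} (v : Fin k → Fin n) (ω : GirgΩ d n) : GirgΩ d k :=
  (fun i => ω.1 (v i), fun i => ω.2.1 (v i), fun e => ω.2.2 (Sym2.map v e))

theorem mp_restr (μW : Measure ℝ) [IsProbabilityMeasure μW] {d n k : ℕ} (v : Fin k → Fin n)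
    (hv : Function.Injective v) :
    MeasurePreserving (restr v) (girgMeasure μW d n) (girgMeasure μW d k) := by
  unfold girgMeasure
  exact (mp_pi_inj μW v hv).prod ((mp_pi_inj volume v hv).prod
    (mp_pi_inj (volume.restrict (Set.Icc (0:ℝ) 1)) (Sym2.map v) (Sym2.map.injective hv)))

theorem mp_restr_pair (μW : Measure ℝ) [IsProbabilityMeasure μW] {d n k : ℕ} (u v : Fin k → Fin n)
    (hu : Function.Injective u) (hv : Function.Injective v) (huv : ∀ i j, u i ≠ v j) :
    MeasurePreserving (fun ω => (restr u ω, restr v ω)) (girgMeasure μW d n)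
      ((girgMeasure μW d k).prod (girgMeasure μW d k)) := by
  unfold girgMeasure
  have h1 := mp_pi_pair μW u v hu hv huv
  have h2 := mp_pi_pair (volume : Measure (Torus d)) u v hu hv huv
  have h3 := mp_pi_pair (volume.restrict (Set.Icc (0:ℝ) 1)) (Sym2.map u) (Sym2.map v)
    (Sym2.map.injective hu) (Sym2.map.injective hv) (by
      intro a b
      induction a with
      | _ a a' =>
      induction b with
      | _ b b' =>
      simp only [Sym2.map_mk, ne_eq, Sym2.eq_iff]
      rintro (⟨h, _⟩ | ⟨h, _⟩)
      · exact huv _ _ h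
      · exact huv _ _ h)
  have h23 := (mp_prod4 _ _ _ _).comp (h2.prod h3)
  exact (mp_prod4 _ _ _ _).comp (h1.prod h23)

theorem lintegral_pi_prod {ι X : Type*} [Fintype ι] [MeasurableSpace X] (μ : Measure X)
    [IsProbabilityMeasure μ] (f : ι → X → ENNReal) (hf : ∀ i, Measurable (f i)) :
    ∫⁻ x, ∏ i, f i (x i) ∂(Measure.pi fun _ : ι => μ) = ∏ i, ∫⁻ x, f i x ∂μ := by
  have h := ProbabilityTheory.lintegral_prod_eq_prod_lintegral_of_indepFun
    (μ := Measure.pi fun _ : ι => μ) Finset.univ (fun i x => f i (x i))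
    (ProbabilityTheory.iIndepFun_pi (fun i => (hf i).aemeasurable)) (fun i => by fun_prop)
  rw [h]
  apply Finset.prod_congr rfl
  intro i _
  exact (measurePreserving_eval (fun _ : ι => μ) i).lintegral_comp (hf i)

theorem path_integral {X : Type*} [AddCommGroup X] [MeasurableSpace X] [MeasurableAdd₂ X] [MeasurableNeg X] [MeasurableSub₂ X]
    (μ : Measure X) [IsProbabilityMeasure μ] [μ.IsAddLeftInvariant] :
    ∀ (m : ℕ) (f : Fin m → X → ENNReal) (_ : ∀ i, Measurable (f i)) (_ : ∀ i x, f i (-x) = f i x),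
    ∫⁻ x, ∏ i : Fin m, f i (x i.succ - x i.castSucc) ∂(Measure.pi fun _ : Fin (m+1) => μ)
      = ∏ i, ∫⁻ x, f i x ∂μ
  | 0, f, hf, he => by simp
  | m+1, f, hf, he => by
    have ih := path_integral μ m (fun i => f i.succ) (fun i => hf _) (fun i => he _)
    have h := measurePreserving_piFinSuccAbove (fun _ : Fin (m+2) => μ) 0
    have e : ∀ x : Fin (m+2) → X, ∏ i : Fin (m+1), f i (x i.succ - x i.castSucc) =
        (fun p : X × (Fin (m+1) → X) => f 0 (p.2 0 - p.1) * ∏ i : Fin m, f i.succ (p.2 i.succ - p.2 i.castSucc))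
        ((MeasurableEquiv.piFinSuccAbove (fun _ => X) 0) x) := by
      intro x
      rw [Fin.prod_univ_succ]
      rfl
    rw [lintegral_congr e]
    refine (h.lintegral_comp (f := fun p : X × (Fin (m+1) → X) => f 0 (p.2 0 - p.1) *
      ∏ i : Fin m, f i.succ (p.2 i.succ - p.2 i.castSucc)) (by fun_prop)).trans ?_
    refine (lintegral_prod_symm (μ := μ) (ν := Measure.pi fun _ : Fin (m+1) => μ) _ (by fun_prop)).trans ?_
    simp only
    have : ∀ y : Fin (m+1) → X, ∫⁻ x, f 0 (y 0 - x) * ∏ i : Fin m, f i.succ (y i.succ - y i.castSucc) ∂μ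
        = (∫⁻ x, f 0 x ∂μ) * ∏ i : Fin m, f i.succ (y i.succ - y i.castSucc) := by
      intro y
      rw [lintegral_mul_const _ (by fun_prop)]
      congr 1
      rw [← lintegral_sub_right_eq_self (f 0) (y 0)]
      apply lintegral_congr
      intro x
      rw [← he 0, neg_sub]
    simp_rw [this]
    rw [lintegral_const_mul _ (by fun_prop), Fin.prod_univ_succ]
    congr 1

theorem torus_ball {d : ℕ} (x : Torus d) {t : ℝ} (ht : 0 ≤ t) :
    volume {z : Torus d | dist z x ≤ t} ≤ ENNReal.ofReal ((2 * t) ^ d) := by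
  have h : {z : Torus d | dist z x ≤ t} = Metric.closedBall x t := rfl
  rw [h, volume_pi, Measure.pi_closedBall _ _ ht]
  calc ∏ i : Fin d, volume (Metric.closedBall (x i) t) ≤ ∏ i : Fin d, ENNReal.ofReal (2 * t) := by
        apply Finset.prod_le_prod' 
        intro i _
        rw [AddCircle.volume_closedBall]
        exact ENNReal.ofReal_le_ofReal (min_le_right _ _)
    _ = _ := by simp [ENNReal.ofReal_pow (by positivity : 0 ≤ 2 * t)]

def edgeF (γ A : ℝ) (d : ℕ) (r : ℝ) : ℝ := min 1 ((A / r ^ d) ^ γ)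

@[fun_prop]
theorem edgeF_meas (γ A : ℝ) (d : ℕ) : Measurable (edgeF γ A d) := by
  unfold edgeF; fun_prop

theorem edge_integral {d : ℕ} (hd : 1 ≤ d) {γ A : ℝ} (hγ : 1 < γ) (hA : 0 < A) :
    ∫⁻ z : Torus d, ENNReal.ofReal (edgeF γ A d ‖z‖) ≤
      ENNReal.ofReal (2 ^ d * (γ / (γ - 1)) * A) := by
  have hd0 : (d:ℝ) ≠ 0 := by positivity
  have hg0 : 0 < γ := by linarith
  rw [lintegral_eq_lintegral_meas_lt _ (Filter.Eventually.of_forall (fun z => by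
    unfold edgeF; simp only [Pi.zero_apply]; positivity)) (by fun_prop)]
  have h1 : ∀ t ∈ Set.Ioi (0:ℝ), volume {z : Torus d | t < edgeF γ A d ‖z‖} ≤
      (Set.Ioc (0:ℝ) 1).indicator (fun t => ENNReal.ofReal (2 ^ d * A * t ^ (-(1/γ)))) t := by
    intro t ht
    by_cases h : t ≤ 1
    · rw [Set.indicator_of_mem (show t ∈ Set.Ioc (0:ℝ) 1 from ⟨ht, h⟩)]
      have ht' : 0 < t ^ (-(1/γ)) := Real.rpow_pos_of_pos ht _
      set ρ : ℝ := (A * t ^ (-(1/γ))) ^ (1/(d:ℝ)) with hρ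
      have hρ0 : 0 ≤ ρ := by positivity
      have hρd : ρ ^ d = A * t ^ (-(1/γ)) := by
        rw [hρ, ← Real.rpow_natCast, ← Real.rpow_mul (by positivity), one_div_mul_cancel hd0, Real.rpow_one]
      calc volume {z : Torus d | t < edgeF γ A d ‖z‖} ≤ volume {z : Torus d | dist z 0 ≤ ρ} := by
            apply measure_mono
            intro z hz
            simp only [Set.mem_ofPred_eq, edgeF, lt_min_iff, dist_zero_right] at hz ⊢
            by_contra hcon
            push Not at hcon
            have hz0 : 0 < ‖z‖ := lt_of_le_of_lt hρ0 hcon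
            have h2 : A / ‖z‖ ^ d ≤ t ^ (1/γ) := by
              rw [div_le_iff₀ (by positivity)]
              have h3 : ρ ^ d ≤ ‖z‖ ^ d := pow_le_pow_left₀ hρ0 hcon.le d
              rw [hρd, Real.rpow_neg ht.le] at h3
              have h4 : 0 < t ^ (1/γ) := Real.rpow_pos_of_pos ht _
              rw [← div_eq_mul_inv, div_le_iff₀ h4] at h3
              linarith
            have h5 : (A / ‖z‖ ^ d) ^ γ ≤ (t ^ (1/γ)) ^ γ :=
              Real.rpow_le_rpow (by positivity) h2 hg0.le
            rw [← Real.rpow_mul ht.le, one_div_mul_cancel hg0.ne', Real.rpow_one] at h5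
            linarith [hz.2]
        _ ≤ ENNReal.ofReal ((2 * ρ) ^ d) := torus_ball 0 hρ0
        _ = _ := by rw [mul_pow, hρd, mul_assoc]
    · have : {z : Torus d | t < edgeF γ A d ‖z‖} = ∅ := by
        ext z
        simp only [Set.mem_ofPred_eq, edgeF, Set.mem_empty_iff_false, iff_false, not_lt]
        exact (min_le_left _ _).trans (not_le.mp h).le
      rw [this]; simp
  refine (setLIntegral_mono' measurableSet_Ioi h1).trans ?_
  refine (setLIntegral_le_lintegral _ _).trans ?_
  rw [lintegral_indicator measurableSet_Ioc]
  have hr : (-1:ℝ) < -(1/γ) := by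
    have : 1 / γ < 1 := by rw [div_lt_one hg0]; exact hγ
    linarith
  have hint : IntervalIntegrable (fun t : ℝ => 2 ^ d * A * t ^ (-(1/γ))) volume 0 1 :=
    (intervalIntegral.intervalIntegrable_rpow' hr).const_mul _
  rw [← ofReal_integral_eq_lintegral_ofReal]
  · apply ENNReal.ofReal_le_ofReal
    rw [← intervalIntegral.integral_of_le zero_le_one, intervalIntegral.integral_const_mul, integral_rpow (Or.inl hr)]
    rw [Real.one_rpow, Real.zero_rpow (by linarith)]
    apply le_of_eq
    have : γ - 1 ≠ 0 := by linarith
    have h6 : -(1/γ) + 1 = (γ - 1) / γ := by field_simp; ring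
    rw [h6]
    field_simp
    ring
  · exact (intervalIntegrable_iff_integrableOn_Ioc_of_le zero_le_one).mp hint
  · refine (ae_restrict_iff' measurableSet_Ioc).mpr (Filter.Eventually.of_forall (fun t ht => ?_))
    have := Real.rpow_nonneg ht.1.le (-(1/γ))
    simp only [Pi.zero_apply]; positivity

theorem edge_integral_tail {d : ℕ} (hd : 1 ≤ d) {γ A r : ℝ} (hγ : 1 < γ) (hA : 0 < A) (hr : 0 < r) :
    ∫⁻ z : Torus d, (if r < ‖z‖ then ENNReal.ofReal (edgeF γ A d ‖z‖) else 0) ≤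
      ENNReal.ofReal ((A / r ^ d) ^ γ * (2 ^ d * (γ / (γ - 1)) * r ^ d)) := by
  have hpos : 0 ≤ (A / r ^ d) ^ γ := by positivity
  calc ∫⁻ z : Torus d, (if r < ‖z‖ then ENNReal.ofReal (edgeF γ A d ‖z‖) else 0)
      ≤ ∫⁻ z : Torus d, ENNReal.ofReal ((A / r ^ d) ^ γ) * ENNReal.ofReal (edgeF γ (r^d) d ‖z‖) := by
        apply lintegral_mono
        intro z
        simp only
        split_ifs with h
        · rw [← ENNReal.ofReal_mul hpos]
          apply ENNReal.ofReal_le_ofReal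
          have hz : 0 < ‖z‖ := hr.trans h
          unfold edgeF
          have h1 : (r ^ d / ‖z‖ ^ d) ^ γ ≤ 1 := by
            apply Real.rpow_le_one (by positivity) _ (by linarith)
            rw [div_le_one (by positivity)]
            exact pow_le_pow_left₀ hr.le h.le d
          rw [min_eq_right h1, ← Real.mul_rpow (by positivity) (by positivity)]
          refine (min_le_right _ _).trans (le_of_eq ?_)
          congr 1
          field_simp
        · exact zero_le
    _ = ENNReal.ofReal ((A / r ^ d) ^ γ) * ∫⁻ z : Torus d, ENNReal.ofReal (edgeF γ (r^d) d ‖z‖) := by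
        rw [lintegral_const_mul _ (by fun_prop)]
    _ ≤ _ := by
        rw [ENNReal.ofReal_mul hpos]
        gcongr
        exact edge_integral hd hγ (by positivity)


instance haar1 (d : ℕ) : (volume : Measure (Fin d → ℝ)).IsAddHaarMeasure := inferInstance
instance haar2 (d m: ℕ) : (volume : Measure (Fin m → Fin d → ℝ)).IsAddHaarMeasure := by
  rw [volume_pi]
  infer_instance

def toTorus {d : ℕ} (y : Fin d → ℝ) : Torus d := fun a => (y a : AddCircle (1:ℝ))

theorem toTorus_sub {d : ℕ} (y z : Fin d → ℝ) : toTorus (y - z) = toTorus y - toTorus z := by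
  ext a; simp [toTorus]

theorem toTorus_zero {d : ℕ} : toTorus (0 : Fin d → ℝ) = 0 := by
  ext a; simp [toTorus]

theorem toTorus_norm {d : ℕ} (y : Fin d → ℝ) (hy : ‖y‖ ≤ 1/2) : ‖toTorus y‖ = ‖y‖ := by
  have h : ∀ a, ‖(y a : AddCircle (1:ℝ))‖ = ‖y a‖ := by
    intro a
    rw [Real.norm_eq_abs]
    apply (AddCircle.norm_coe_eq_abs_iff _ one_ne_zero).mpr
    have := (norm_le_pi_norm y a).trans hy
    simpa using this
  simp only [Pi.norm_def, toTorus]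
  congr 1
  apply Finset.sup_congr rfl
  intro a _
  exact NNReal.eq (h a)

theorem toTorus_mp (m d : ℕ) : MeasurePreserving
    (fun y : Fin m → Fin d → ℝ => fun i => toTorus (y i))
    ((volume : Measure (Fin m → Fin d → ℝ)).restrict
      (Set.univ.pi fun _ => Set.univ.pi fun _ => Set.Ioc (-(1/2):ℝ) (1/2)))
    (volume : Measure (Fin m → Torus d)) := by
  have h0 : MeasurePreserving ((↑) : ℝ → AddCircle (1:ℝ))
      ((volume : Measure ℝ).restrict (Set.Ioc (-(1/2):ℝ) (1/2))) volume := by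
    have := AddCircle.measurePreserving_mk (1:ℝ) (-(1/2))
    norm_num at this ⊢
    exact this
  have h1 : MeasurePreserving (toTorus : (Fin d → ℝ) → Torus d)
      ((volume : Measure (Fin d → ℝ)).restrict (Set.univ.pi fun _ => Set.Ioc (-(1/2):ℝ) (1/2)))
      volume := by
    rw [volume_pi, Measure.restrict_pi_pi]
    exact measurePreserving_pi (μ := fun _ : Fin d => (volume : Measure ℝ).restrict (Set.Ioc (-(1/2):ℝ) (1/2)))
      (ν := fun _ : Fin d => (volume : Measure (AddCircle (1:ℝ)))) (fun _ => h0)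
  rw [volume_pi, Measure.restrict_pi_pi]
  exact measurePreserving_pi (μ := fun _ : Fin m => (volume : Measure (Fin d → ℝ)).restrict (Set.univ.pi fun _ => Set.Ioc (-(1/2):ℝ) (1/2)))
      (ν := fun _ : Fin m => (volume : Measure (Torus d))) (fun _ => h1)

def cz {m : ℕ} {X : Type*} [Zero X] (y : Fin m → X) : Fin (m+1) → X := Fin.cons 0 y

theorem cz_meas {m : ℕ} {X : Type*} [Zero X] [MeasurableSpace X] : Measurable (cz : (Fin m → X) → (Fin (m+1) → X)) := by
  unfold cz
  rw [measurable_pi_iff]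
  intro i
  refine Fin.cases ?_ ?_ i
  · simp
  · intro j; simpa using measurable_pi_apply j

theorem spatial_scale {m d : ℕ} (F : (Fin (m+1) → Fin (m+1) → ℝ) → ENNReal)
    (hF : Measurable F) (R N : ℝ) (hFR : ∀ D, (∃ i j, R < D i j) → F D = 0)
    (hN0 : 0 < N) (hN : 4 * R < N) :
    ENNReal.ofReal (N ^ (d * m)) *
      ∫⁻ x : Fin (m+1) → Torus d, F (fun i j => N * dist (x i) (x j)) ∂(Measure.pi fun _ => volume) =
    ∫⁻ y : Fin m → Fin d → ℝ, F (fun i j => dist (cz y i) (cz y j)) := by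
  set g : (Fin m → Torus d) → ENNReal := fun z => F (fun i j => N * dist (cz z i) (cz z j)) with hg
  have cm1 : Measurable (cz : (Fin m → Torus d) → _) := cz_meas
  have cm2 : Measurable (cz : (Fin m → Fin d → ℝ) → _) := cz_meas
  have hgm : Measurable g := by
    apply hF.comp
    rw [measurable_pi_iff]; intro i
    rw [measurable_pi_iff]; intro j
    exact (((measurable_pi_apply i).comp cm1).dist ((measurable_pi_apply j).comp cm1)).const_mul N
  set G : (Fin m → Fin d → ℝ) → ENNReal := fun y => F (fun i j => dist (cz y i) (cz y j)) with hG
  have hGm : Measurable G := by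
    apply hF.comp
    rw [measurable_pi_iff]; intro i
    rw [measurable_pi_iff]; intro j
    exact (((measurable_pi_apply i).comp cm2).dist ((measurable_pi_apply j).comp cm2))
  -- Step 1
  have s1 : ∫⁻ x : Fin (m+1) → Torus d, F (fun i j => N * dist (x i) (x j)) ∂(Measure.pi fun _ => volume)
      = ∫⁻ z, g z := by
    have h := measurePreserving_piFinSuccAbove (fun _ : Fin (m+1) => (volume : Measure (Torus d))) 0
    have e : ∀ x : Fin (m+1) → Torus d, F (fun i j => N * dist (x i) (x j)) =
        (fun p : Torus d × (Fin m → Torus d) => g (p.2 - fun _ => p.1))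
        ((MeasurableEquiv.piFinSuccAbove (fun _ => Torus d) 0) x) := by
      intro x
      have hx : ∀ i, cz ((fun i : Fin m => x i.succ) - fun _ => x 0) i = x i - x 0 := by
        intro i
        refine Fin.cases ?_ ?_ i
        · simp [cz]
        · intro j; simp [cz]
      show _ = g ((fun i : Fin m => x i.succ) - fun _ => x 0)
      simp only [hg, hx, dist_sub_right]
    rw [lintegral_congr e]
    refine (h.lintegral_comp (f := fun p : Torus d × (Fin m → Torus d) => g (p.2 - fun _ => p.1))
      (by fun_prop)).trans ?_
    rw [lintegral_prod _ (by fun_prop)]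
    simp only
    have : ∀ x : Torus d, ∫⁻ y, g (y - fun _ => x) ∂(Measure.pi fun _ : Fin m => (volume : Measure (Torus d)))
        = ∫⁻ z, g z := by
      intro x
      have h9 := lintegral_add_left_eq_self (μ := (volume : Measure (Fin m → Torus d))) g (-fun _ => x)
      simp only [neg_add_eq_sub] at h9
      exact h9
    simp_rw [this]
    simp
  -- Step 2
  have s2 := (toTorus_mp m d).lintegral_comp hgm
  rw [s1, ← s2]
  set B : Set (Fin m → Fin d → ℝ) := Set.univ.pi fun _ => Set.univ.pi fun _ => Set.Ioc (-(1/2):ℝ) (1/2)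
  have hBm : MeasurableSet B := MeasurableSet.univ_pi fun _ => MeasurableSet.univ_pi fun _ => measurableSet_Ioc
  have hnorm : ∀ y : Fin m → Fin d → ℝ, ∀ i : Fin m, G (N • y) ≠ 0 → ‖y i‖ ≤ R / N := by
    intro y i h
    by_contra hc
    push Not at hc
    apply h
    apply hFR
    refine ⟨i.succ, 0, ?_⟩
    rw [div_lt_iff₀ hN0] at hc
    simp only [cz, Fin.cons_succ, Fin.cons_zero, dist_zero_right, Pi.smul_apply, norm_smul, Real.norm_eq_abs, abs_of_pos hN0]
    linarith
  have hRN : R / N < 1/4 := by rw [div_lt_iff₀ hN0]; linarith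
  have hcz : ∀ y : Fin m → Fin d → ℝ, ∀ i, cz (N • y) i = N • cz y i := by
    intro y i
    refine Fin.cases ?_ ?_ i
    · simp [cz]
    · intro j; simp [cz]
  have hczt : ∀ y : Fin m → Fin d → ℝ, ∀ i, cz (fun i => toTorus (y i)) i = toTorus (cz y i) := by
    intro y i
    refine Fin.cases ?_ ?_ i
    · simp [cz, toTorus_zero]
    · intro j; simp [cz]
  have s3 : ∫⁻ y in B, g (fun i => toTorus (y i)) = ∫⁻ y, G (N • y) := by
    rw [← lintegral_indicator hBm]
    apply lintegral_congr
    intro y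
    by_cases hy : y ∈ B
    · rw [Set.indicator_of_mem hy]
      have hyn : ∀ i, ‖y i‖ ≤ 1/2 := by
        intro i
        rw [pi_norm_le_iff_of_nonneg (by norm_num)]
        intro a
        have := hy i trivial a trivial
        rw [Real.norm_eq_abs, abs_le]
        exact ⟨this.1.le, this.2⟩
      by_cases hs : ∀ i, ‖y i‖ ≤ R / N
      · simp only [hg, hG]
        congr 1
        ext i j
        rw [hczt, hczt, hcz, hcz, dist_smul₀, Real.norm_eq_abs, abs_of_pos hN0, dist_eq_norm, dist_eq_norm, ← toTorus_sub, toTorus_norm]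
        have hb : ∀ i, ‖cz y i‖ ≤ 1/4 := by
          intro i
          refine Fin.cases ?_ ?_ i
          · simp [cz]
          · intro j; simpa [cz] using (hs j).trans hRN.le
        calc ‖cz y i - cz y j‖ ≤ ‖cz y i‖ + ‖cz y j‖ := norm_sub_le _ _
          _ ≤ 1/4 + 1/4 := add_le_add (hb i) (hb j)
          _ = 1/2 := by norm_num
      · push Not at hs
        obtain ⟨i, hi⟩ := hs
        have h1 : G (N • y) = 0 := by
          by_contra h
          exact absurd (hnorm y i h) (not_le.mpr hi)
        rw [h1]
        apply hFR
        refine ⟨i.succ, 0, ?_⟩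
        rw [div_lt_iff₀ hN0] at hi
        simp only [cz, Fin.cons_succ, Fin.cons_zero, dist_zero_right]
        rw [toTorus_norm _ (hyn i)]
        linarith
    · rw [Set.indicator_of_notMem hy]
      symm
      by_contra h
      apply hy
      intro i _ a _
      have h1 := ((norm_le_pi_norm (y i) a).trans (hnorm y i h)).trans_lt hRN
      rw [Real.norm_eq_abs, abs_lt] at h1
      constructor <;> linarith [h1.1, h1.2]
  rw [s3]
  have h4 := Measure.map_addHaar_smul (volume : Measure (Fin m → Fin d → ℝ)) hN0.ne'
  have h5 : ∫⁻ y, G (N • y) = ∫⁻ y, G y ∂(Measure.map (N • ·) (volume : Measure (Fin m → Fin d → ℝ))) := by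
    rw [lintegral_map hGm (measurable_const_smul N)]
  rw [h5, h4, lintegral_smul_measure, smul_eq_mul, ← mul_assoc]
  have hfr : Module.finrank ℝ (Fin m → Fin d → ℝ) = d * m := by
    simp [Module.finrank_pi_fintype, mul_comm]
  have hp : 0 < N ^ (d * m) := by positivity
  rw [hfr, abs_of_pos (by positivity), ← ENNReal.ofReal_mul hp.le, mul_inv_cancel₀ hp.ne', ENNReal.ofReal_one, one_mul]

def PatD (s : StarKind) {k : ℕ} (H : SimpleGraph (Fin k)) (γ μb : ℝ) (d : ℕ) (w : Fin k → ℝ)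
    (D : Fin k → Fin k → ℝ) (c : Sym2 (Fin k) → ℝ) : Prop :=
  match s with
  | .sub => ∀ i j, H.Adj i j → c s(i, j) ≤ edgeF γ (w i * w j / μb) d (D i j)
  | .ind => ∀ i j, i ≠ j → (H.Adj i j ↔ c s(i, j) ≤ edgeF γ (w i * w j / μb) d (D i j))

theorem PatD.sub {s : StarKind} {k : ℕ} {H : SimpleGraph (Fin k)} {γ μb : ℝ} {d : ℕ} {w : Fin k → ℝ}
    {D : Fin k → Fin k → ℝ} {c : Sym2 (Fin k) → ℝ} (h : PatD s H γ μb d w D c) :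
    ∀ i j, H.Adj i j → c s(i, j) ≤ edgeF γ (w i * w j / μb) d (D i j) := by
  cases s with
  | sub => exact h
  | ind => exact fun i j hij => (h i j hij.ne).mp hij

theorem PatD_meas (s : StarKind) {k : ℕ} (H : SimpleGraph (Fin k)) (γ μb : ℝ) (d : ℕ) :
    MeasurableSet {p : (Fin k → ℝ) × (Fin k → Fin k → ℝ) × (Sym2 (Fin k) → ℝ) |
      PatD s H γ μb d p.1 p.2.1 p.2.2} := by
  have h1 : ∀ i j, MeasurableSet {p : (Fin k → ℝ) × (Fin k → Fin k → ℝ) × (Sym2 (Fin k) → ℝ) |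
      p.2.2 s(i, j) ≤ edgeF γ (p.1 i * p.1 j / μb) d (p.2.1 i j)} := by
    intro i j
    apply measurableSet_le
    · fun_prop
    · unfold edgeF; fun_prop
  cases s with
  | sub =>
    simp only [PatD, Set.ofPred_forall]
    exact MeasurableSet.iInter fun i => MeasurableSet.iInter fun j => MeasurableSet.iInter fun _ => h1 i j
  | ind =>
    simp only [PatD, Set.ofPred_forall]
    refine MeasurableSet.iInter fun i => MeasurableSet.iInter fun j => MeasurableSet.iInter fun _ => ?_
    by_cases h : H.Adj i j
    · simpa [h] using h1 i j
    · have := (h1 i j).compl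
      simp only [h, false_iff]
      exact this

abbrev coinPi (k : ℕ) : Measure (Sym2 (Fin k) → ℝ) :=
  Measure.pi fun _ : Sym2 (Fin k) => volume.restrict (Set.Icc (0:ℝ) 1)

theorem coin_bound {m : ℕ} (s : StarKind) (H : SimpleGraph (Fin (m+1))) (γ μb : ℝ) (d : ℕ)
    (w : Fin (m+1) → ℝ) (D : Fin (m+1) → Fin (m+1) → ℝ)
    (ρ : Fin (m+1) → Fin (m+1)) (hρ : Function.Injective ρ)
    (hadj : ∀ i : Fin m, H.Adj (ρ i.castSucc) (ρ i.succ)) :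
    coinPi (m+1) {c | PatD s H γ μb d w D c} ≤
      ∏ i : Fin m, ENNReal.ofReal (edgeF γ (w (ρ i.castSucc) * w (ρ i.succ) / μb) d
        (D (ρ i.castSucc) (ρ i.succ))) := by
  set p : Fin m → ℝ := fun i => edgeF γ (w (ρ i.castSucc) * w (ρ i.succ) / μb) d
        (D (ρ i.castSucc) (ρ i.succ)) with hp
  have h := mp_pi_inj (volume.restrict (Set.Icc (0:ℝ) 1))
    (fun i : Fin m => s(ρ i.castSucc, ρ i.succ)) (path_edge_inj ρ hρ)
  have hm : MeasurableSet (Set.univ.pi fun i : Fin m => Set.Iic (p i)) :=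
    MeasurableSet.univ_pi fun _ => measurableSet_Iic
  calc coinPi (m+1) {c | PatD s H γ μb d w D c} ≤
      coinPi (m+1) ((fun f : Sym2 (Fin (m+1)) → ℝ => fun i : Fin m => f s(ρ i.castSucc, ρ i.succ)) ⁻¹'
        (Set.univ.pi fun i : Fin m => Set.Iic (p i))) := by
        apply measure_mono
        intro c hc i _
        exact PatD.sub hc _ _ (hadj i)
    _ = _ := h.measure_preimage hm.nullMeasurableSet
    _ = ∏ i : Fin m, (volume.restrict (Set.Icc (0:ℝ) 1)) (Set.Iic (p i)) := Measure.pi_pi _ _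
    _ ≤ _ := by
        apply Finset.prod_le_prod'
        intro i _
        rw [Measure.restrict_apply measurableSet_Iic]
        calc volume (Set.Iic (p i) ∩ Set.Icc 0 1) ≤ volume (Set.Icc 0 (p i)) := by
              apply measure_mono; rintro x ⟨h1, h2⟩; exact ⟨h2.1, h1⟩
          _ = _ := by rw [Real.volume_Icc, sub_zero]

theorem path_scaled {m d : ℕ} (ρ : Fin (m+1) → Fin (m+1)) (hρ : Function.Injective ρ) (N : ℝ)
    (f : Fin m → ℝ → ENNReal) (hf : ∀ i, Measurable (f i)) :
    ∫⁻ x : Fin (m+1) → Torus d, ∏ i : Fin m, f i (N * dist (x (ρ i.castSucc)) (x (ρ i.succ)))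
      ∂(Measure.pi fun _ => volume) = ∏ i, ∫⁻ z : Torus d, f i (N * ‖z‖) := by
  have h1 := path_integral (volume : Measure (Torus d)) m (fun i z => f i (N * ‖z‖))
    (fun i => by fun_prop) (fun i z => by simp)
  have h2 := (mp_pi_inj (volume : Measure (Torus d)) ρ hρ).lintegral_comp
    (f := fun x => ∏ i : Fin m, f i (N * ‖x i.succ - x i.castSucc‖)) (by fun_prop)
  rw [← h1, ← h2]
  apply lintegral_congr; intro x; apply Finset.prod_congr rfl; intro i _; rw [dist_comm, dist_eq_norm]

def Cg (d : ℕ) (γ : ℝ) : ℝ := 2 ^ d * (γ / (γ - 1))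

theorem Cg_pos (d : ℕ) {γ : ℝ} (hγ : 1 < γ) : 0 < Cg d γ := by
  have : 0 < γ - 1 := by linarith
  unfold Cg; positivity

theorem edgeF_scale (γ A N r : ℝ) (d : ℕ) : edgeF γ A d (N * r) = edgeF γ (A / N ^ d) d r := by
  unfold edgeF; rw [mul_pow, div_div]

theorem edge_scaled {d : ℕ} (hd : 1 ≤ d) {γ A N : ℝ} (hγ : 1 < γ) (hA : 0 < A) (hN : 0 < N) :
    ENNReal.ofReal (N ^ d) * ∫⁻ z : Torus d, ENNReal.ofReal (edgeF γ A d (N * ‖z‖)) ≤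
      ENNReal.ofReal (Cg d γ * A) := by
  simp_rw [edgeF_scale]
  refine (mul_le_mul_right (edge_integral hd hγ (by positivity)) _).trans ?_
  rw [← ENNReal.ofReal_mul (by positivity)]
  apply ENNReal.ofReal_le_ofReal
  apply le_of_eq
  unfold Cg
  field_simp

def tailB (d : ℕ) (γ A r : ℝ) : ℝ := (A / r ^ d) ^ γ * (Cg d γ * r ^ d)

theorem edge_scaled_tail {d : ℕ} (hd : 1 ≤ d) {γ A N r : ℝ} (hγ : 1 < γ) (hA : 0 < A) (hN : 0 < N)
    (hr : 0 < r) :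
    ENNReal.ofReal (N ^ d) * ∫⁻ z : Torus d, (if r < N * ‖z‖ then
      ENNReal.ofReal (edgeF γ A d (N * ‖z‖)) else 0) ≤ ENNReal.ofReal (tailB d γ A r) := by
  simp_rw [edgeF_scale]
  have h : ∀ z : Torus d, r < N * ‖z‖ ↔ r / N < ‖z‖ := fun z => by rw [div_lt_iff₀ hN, mul_comm]
  simp_rw [h]
  refine (mul_le_mul_right (edge_integral_tail hd hγ (by positivity) (by positivity)) _).trans ?_
  rw [← ENNReal.ofReal_mul (by positivity)]
  apply ENNReal.ofReal_le_ofReal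
  apply le_of_eq
  unfold tailB Cg
  have : A / N ^ d / (r / N) ^ d = A / r ^ d := by rw [div_pow]; field_simp
  rw [this, div_pow]
  field_simp

theorem tailB_tendsto {d : ℕ} (hd : 1 ≤ d) {γ A : ℝ} (hγ : 1 < γ) (hA : 0 < A) :
    Tendsto (fun r => tailB d γ A r) atTop (nhds 0) := by
  have h1 : Tendsto (fun r : ℝ => A ^ γ * Cg d γ * (r ^ d) ^ (-(γ - 1))) atTop (nhds (A ^ γ * Cg d γ * 0)) := by
    apply Tendsto.const_mul
    exact (tendsto_rpow_neg_atTop (by linarith)).comp (tendsto_pow_atTop (by omega))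
  rw [mul_zero] at h1
  refine h1.congr' ?_
  filter_upwards [eventually_gt_atTop 0] with r hr
  have hrd : 0 < r ^ d := by positivity
  unfold tailB
  rw [Real.div_rpow hA.le hrd.le, neg_sub, Real.rpow_sub hrd, Real.rpow_one]
  have : (r ^ d) ^ γ ≠ 0 := by positivity
  field_simp

theorem K1 {m d : ℕ} (hd : 1 ≤ d) {γ μb N : ℝ} (hγ : 1 < γ) (hμ : 0 < μb) (hN : 0 < N)
    (s : StarKind) (H : SimpleGraph (Fin (m+1))) (w : Fin (m+1) → ℝ) (hw : ∀ i, 0 < w i)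
    (ρ : Fin (m+1) → Fin (m+1)) (hρ : Function.Injective ρ)
    (hadj : ∀ i : Fin m, H.Adj (ρ i.castSucc) (ρ i.succ)) :
    ENNReal.ofReal (N ^ (d * m)) * ∫⁻ x : Fin (m+1) → Torus d,
      coinPi (m+1) {c | PatD s H γ μb d w (fun i j => N * dist (x i) (x j)) c}
        ∂(Measure.pi fun _ => volume) ≤
    ∏ i : Fin m, ENNReal.ofReal (Cg d γ * (w (ρ i.castSucc) * w (ρ i.succ) / μb)) := by
  calc _ ≤ ENNReal.ofReal (N ^ (d * m)) * ∫⁻ x : Fin (m+1) → Torus d,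
        ∏ i : Fin m, ENNReal.ofReal (edgeF γ (w (ρ i.castSucc) * w (ρ i.succ) / μb) d
        (N * dist (x (ρ i.castSucc)) (x (ρ i.succ)))) ∂(Measure.pi fun _ => volume) := by
        gcongr with x
        exact coin_bound s H γ μb d w _ ρ hρ hadj
    _ = ∏ i : Fin m, (ENNReal.ofReal (N ^ d) * ∫⁻ z : Torus d,
          ENNReal.ofReal (edgeF γ (w (ρ i.castSucc) * w (ρ i.succ) / μb) d (N * ‖z‖))) := by
        rw [path_scaled ρ hρ N (fun i r => ENNReal.ofReal (edgeF γ (w (ρ i.castSucc) * w (ρ i.succ) / μb) d r)) (fun i => by fun_prop)]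
        rw [Finset.prod_mul_distrib, Finset.prod_const, Finset.card_univ, Fintype.card_fin, pow_mul, ENNReal.ofReal_pow (by positivity)]
    _ ≤ _ := by
        apply Finset.prod_le_prod'
        intro i _
        exact edge_scaled hd hγ (div_pos (mul_pos (hw _) (hw _)) hμ) hN

theorem path_close {m : ℕ} {X : Type*} [PseudoMetricSpace X] (x : Fin (m+1) → X) {ρ : Fin (m+1) → Fin (m+1)}
    (hρ : Function.Injective ρ) {N R : ℝ} (hN : 0 < N) (hR : 0 < R)
    (h : ∀ i : Fin m, N * dist (x (ρ i.castSucc)) (x (ρ i.succ)) ≤ R / (2 * (m+1))) :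
    ∀ i j, N * dist (x i) (x j) ≤ R := by
  have h1 : ∀ a : Fin (m+1), N * dist (x (ρ 0)) (x (ρ a)) ≤ a.val * (R / (2 * (m+1))) := by
    intro a
    induction a using Fin.induction with
    | zero => simp
    | succ i ih =>
      have := dist_triangle (x (ρ 0)) (x (ρ i.castSucc)) (x (ρ i.succ))
      have h2 := h i
      have h3 := mul_le_mul_of_nonneg_left this hN.le
      simp only [Fin.val_succ, Fin.val_castSucc, Nat.cast_add, Nat.cast_one] at ih ⊢
      linarith
  have h2 : ∀ a : Fin (m+1), N * dist (x (ρ 0)) (x (ρ a)) ≤ R / 2 := by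
    intro a
    refine (h1 a).trans ?_
    have ha : (a.val : ℝ) ≤ m + 1 := by exact_mod_cast a.isLt.le
    calc a.val * (R / (2 * (m+1))) ≤ (m+1) * (R / (2 * (m+1))) := by gcongr
      _ = R / 2 := by field_simp
  intro i j
  obtain ⟨a, rfl⟩ := (Finite.injective_iff_surjective.mp hρ) i
  obtain ⟨b, rfl⟩ := (Finite.injective_iff_surjective.mp hρ) j
  have h3 := dist_triangle_left (x (ρ a)) (x (ρ b)) (x (ρ 0))
  have h4 := mul_le_mul_of_nonneg_left h3 hN.le
  linarith [h2 a, h2 b]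

theorem K2 {m d : ℕ} (hd : 1 ≤ d) {γ μb N R : ℝ} (hγ : 1 < γ) (hμ : 0 < μb) (hN : 0 < N) (hR : 0 < R)
    (s : StarKind) (H : SimpleGraph (Fin (m+1))) (w : Fin (m+1) → ℝ) (hw : ∀ i, 0 < w i)
    (ρ : Fin (m+1) → Fin (m+1)) (hρ : Function.Injective ρ)
    (hadj : ∀ i : Fin m, H.Adj (ρ i.castSucc) (ρ i.succ)) :
    ENNReal.ofReal (N ^ (d * m)) * ∫⁻ x : Fin (m+1) → Torus d,
      coinPi (m+1) {c | PatD s H γ μb d w (fun i j => N * dist (x i) (x j)) c ∧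
        ¬ ∀ i j, N * dist (x i) (x j) ≤ R} ∂(Measure.pi fun _ => volume) ≤
    ∑ i1 : Fin m, ∏ i : Fin m, ENNReal.ofReal (if i = i1 then
        tailB d γ (w (ρ i.castSucc) * w (ρ i.succ) / μb) (R / (2 * (m+1))) else
        Cg d γ * (w (ρ i.castSucc) * w (ρ i.succ) / μb)) := by
  have hr : 0 < R / (2 * ((m:ℝ)+1)) := by positivity
  set A : Fin m → ℝ := fun i => w (ρ i.castSucc) * w (ρ i.succ) / μb with hA
  have hA0 : ∀ i, 0 < A i := fun i => div_pos (mul_pos (hw _) (hw _)) hμ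
  set f : Fin m → Fin m → ℝ → ENNReal := fun i1 i r => if i = i1 then
    (if R / (2 * ((m:ℝ)+1)) < r then ENNReal.ofReal (edgeF γ (A i) d r) else 0) else ENNReal.ofReal (edgeF γ (A i) d r) with hf
  have hfm : ∀ i1 i, Measurable (f i1 i) := by
    intro i1 i
    simp only [hf]
    split_ifs
    · exact Measurable.ite measurableSet_Ioi (by fun_prop) measurable_const
    · fun_prop
  calc _ ≤ ENNReal.ofReal (N ^ (d * m)) * ∫⁻ x : Fin (m+1) → Torus d,
        ∑ i1, ∏ i : Fin m, f i1 i (N * dist (x (ρ i.castSucc)) (x (ρ i.succ))) ∂(Measure.pi fun _ => volume) := by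
        gcongr with x
        by_cases hx : ∀ i j, N * dist (x i) (x j) ≤ R
        · have : {c | PatD s H γ μb d w (fun i j => N * dist (x i) (x j)) c ∧
            ¬ ∀ i j, N * dist (x i) (x j) ≤ R} = ∅ := by
            ext c; simp only [Set.mem_ofPred_eq, Set.mem_empty_iff_false, iff_false]; tauto
          rw [this]; simp
        · obtain ⟨i1, hi1⟩ : ∃ i : Fin m, R / (2 * (m+1)) < N * dist (x (ρ i.castSucc)) (x (ρ i.succ)) := by
            by_contra hcon
            push Not at hcon
            exact hx (path_close x hρ hN hR hcon)
          refine le_trans ?_ (Finset.single_le_sum (f := fun i1 => ∏ i : Fin m, f i1 i (N * dist (x (ρ i.castSucc)) (x (ρ i.succ)))) (fun _ _ => zero_le) (Finset.mem_univ i1))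
          refine (measure_mono (fun c hc => hc.1)).trans ((coin_bound s H γ μb d w _ ρ hρ hadj).trans (le_of_eq ?_))
          apply Finset.prod_congr rfl
          intro i _
          simp only [hf]
          split_ifs with h1 h2
          · rfl
          · subst h1; exact absurd hi1 h2
          · rfl
    _ = ∑ i1, ∏ i : Fin m, (ENNReal.ofReal (N ^ d) * ∫⁻ z : Torus d, f i1 i (N * ‖z‖)) := by
        rw [lintegral_finsetSum _ (fun i1 _ => by fun_prop), Finset.mul_sum]
        apply Finset.sum_congr rfl
        intro i1 _
        rw [path_scaled ρ hρ N (f i1) (hfm i1)]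
        rw [Finset.prod_mul_distrib, Finset.prod_const, Finset.card_univ, Fintype.card_fin, pow_mul, ENNReal.ofReal_pow (by positivity)]
    _ ≤ _ := by
        apply Finset.sum_le_sum
        intro i1 _
        apply Finset.prod_le_prod'
        intro i _
        simp only [hf]
        split_ifs with h
        · exact edge_scaled_tail hd hγ (hA0 i) hN hr
        · exact edge_scaled hd hγ (hA0 i) hN

theorem w_ge_one {τ c : ℝ} {μW : Measure ℝ} (hW : WeightTail τ c μW) : ∀ᵐ x ∂μW, 1 ≤ x := by
  rw [ae_iff]
  have : {a : ℝ | ¬ 1 ≤ a} = Set.Iio 1 := by ext; simp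
  rw [this]; exact hW.2.1

theorem w_moment {τ c p : ℝ} {μW : Measure ℝ} [IsProbabilityMeasure μW] (hW : WeightTail τ c μW)
    (hp : 0 < p) (hpτ : p < τ - 1) : ∫⁻ x, ENNReal.ofReal (x ^ p) ∂μW < ⊤ := by
  rw [lintegral_rpow_eq_lintegral_meas_lt_mul μW
    ((w_ge_one hW).mono fun x hx => by simp only [Pi.zero_apply]; linarith) aemeasurable_id' hp]
  apply ENNReal.mul_lt_top ENNReal.ofReal_lt_top
  obtain ⟨hc, -, ht⟩ := hW
  have h2 := (ht.eventually (gt_mem_nhds (show (1:ℝ) < 2 by norm_num))).and (eventually_ge_atTop 1)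
  obtain ⟨t0, ht0⟩ := eventually_atTop.mp h2
  set t1 := max t0 1 with ht1
  have ht1p : 0 < t1 := lt_of_lt_of_le one_pos (le_max_right _ _)
  have hb : ∀ t, t1 < t → μW {a | t < a} ≤ ENNReal.ofReal (2 * c * t ^ (1 - τ)) := by
    intro t hlt
    have htp : 0 < t := ht1p.trans hlt
    have h := (ht0 t ((le_max_left _ _).trans hlt.le)).1
    have hpos : 0 < c * t ^ (1 - τ) := by positivity
    rw [div_lt_iff₀ hpos] at h
    rw [← ENNReal.ofReal_toReal (measure_ne_top μW {a | t < a})]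
    apply ENNReal.ofReal_le_ofReal
    have : (μW {a | t < a}).toReal = (μW (Set.Ioi t)).toReal := rfl
    rw [this]; linarith
  rw [← Set.Ioc_union_Ioi_eq_Ioi ht1p.le]
  refine (lintegral_union_le _ _ _).trans_lt (ENNReal.add_lt_top.mpr ⟨?_, ?_⟩)
  · calc _ ≤ ∫⁻ t in Set.Ioc 0 t1, ENNReal.ofReal (t ^ (p - 1)) := by
          apply lintegral_mono; intro t
          calc _ ≤ 1 * ENNReal.ofReal (t ^ (p - 1)) := mul_le_mul_left (prob_le_one) _
            _ = _ := one_mul _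
      _ < ⊤ := by
          have h := (intervalIntegral.intervalIntegrable_rpow' (a := 0) (b := t1) (show -1 < p - 1 by linarith)).1
          exact (hasFiniteIntegral_iff_ofReal (by
            filter_upwards [ae_restrict_mem measurableSet_Ioc] with t ht
            exact Real.rpow_nonneg ht.1.le _)).mp h.2
  · calc _ ≤ ∫⁻ t in Set.Ioi t1, ENNReal.ofReal (2 * c * t ^ (p - τ)) := by
          apply setLIntegral_mono' measurableSet_Ioi
          intro t ht
          have ht' : 0 < t := ht1p.trans ht
          calc _ ≤ ENNReal.ofReal (2 * c * t ^ (1 - τ)) * ENNReal.ofReal (t ^ (p - 1)) := by gcongr; exact hb t ht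
            _ = _ := by
              rw [← ENNReal.ofReal_mul (by positivity), mul_assoc, ← Real.rpow_add ht']
              congr 3; ring
      _ < ⊤ := by
          have h := (integrableOn_Ioi_rpow_of_lt (show p - τ < -1 by linarith) ht1p).const_mul (2 * c)
          exact (hasFiniteIntegral_iff_ofReal (by
            filter_upwards [ae_restrict_mem measurableSet_Ioi] with t ht
            have : 0 < t := ht1p.trans ht
            positivity)).mp h.2

theorem wMean_pos {τ c : ℝ} (hτ : 2 < τ) {μW : Measure ℝ} [IsProbabilityMeasure μW] (hW : WeightTail τ c μW) :
    0 < wMean μW := by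
  have h := w_moment hW one_pos (by linarith)
  have hint : Integrable (fun x : ℝ => x) μW := by
    refine ⟨by fun_prop, ?_⟩
    rw [hasFiniteIntegral_iff_ofReal ((w_ge_one hW).mono fun x hx => by simp only [Pi.zero_apply]; linarith)]
    simpa using h
  have : ∫ x, (1:ℝ) ∂μW ≤ ∫ x, x ∂μW := integral_mono_ae (by simp) hint (w_ge_one hW)
  simp at this
  unfold wMean; linarith

/-- the scaled spatial mass -/
def Qs (s : StarKind) {m : ℕ} (H : SimpleGraph (Fin (m+1))) (γ μb : ℝ) (d : ℕ) (N : ℝ) (w : Fin (m+1) → ℝ) : ENNReal :=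
  ENNReal.ofReal (N ^ (d * m)) * ∫⁻ x : Fin (m+1) → Torus d,
      coinPi (m+1) {c | PatD s H γ μb d w (fun i j => N * dist (x i) (x j)) c}
        ∂(Measure.pi fun _ => volume)

def Gm (γ μb : ℝ) (d m : ℕ) (w : Fin (m+1) → ℝ) : ENNReal :=
  ENNReal.ofReal ((Cg d γ / μb) ^ m) * ∏ i, ENNReal.ofReal (w i ^ (2 * (m:ℝ) / (m+1)))

theorem path_rot_prod {m : ℕ} (σ : Equiv.Perm (Fin (m+1))) (w : Fin (m+1) → ℝ) :
    ∏ j : Fin (m+1), ∏ i : Fin m, (w (σ (i.castSucc + j)) * w (σ (i.succ + j))) = (∏ i, w i) ^ (2 * m) := by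
  have h : ∀ a : Fin (m+1), ∏ j : Fin (m+1), w (σ (a + j)) = ∏ i, w i := by
    intro a
    exact Equiv.prod_comp ((Equiv.addLeft a).trans σ) w
  rw [Finset.prod_comm]
  simp_rw [Finset.prod_mul_distrib, h]
  simp [two_mul, pow_add]

theorem Qs_le {m d : ℕ} (hd : 1 ≤ d) {γ μb N : ℝ} (hγ : 1 < γ) (hμ : 0 < μb) (hN : 0 < N)
    (s : StarKind) (H : SimpleGraph (Fin (m+1))) (w : Fin (m+1) → ℝ) (hw : ∀ i, 0 < w i)
    (σ : Equiv.Perm (Fin (m+1))) (hσ : ∀ i, H.Adj (σ i) (σ (i+1))) :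
    Qs s H γ μb d N w ≤ Gm γ μb d m w := by
  have hC := Cg_pos d hγ
  have h1 : ∀ j, Qs s H γ μb d N w ≤ ENNReal.ofReal
      (∏ i : Fin m, (Cg d γ * (w (σ (i.castSucc + j)) * w (σ (i.succ + j)) / μb))) := by
    intro j
    rw [ENNReal.ofReal_prod_of_nonneg (fun i _ => by have := hw (σ (i.castSucc + j)); have := hw (σ (i.succ + j)); positivity)]
    exact K1 hd hγ hμ hN s H w hw (fun i => σ (i + j)) (fun a b hab => by simpa using hab)
      (fun i => ham_path hσ j i)
  have h2 : Qs s H γ μb d N w ^ (m+1) ≤ ∏ j : Fin (m+1), ENNReal.ofReal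
      (∏ i : Fin m, (Cg d γ * (w (σ (i.castSucc + j)) * w (σ (i.succ + j)) / μb))) := by
    calc _ = ∏ j : Fin (m+1), Qs s H γ μb d N w := by simp
      _ ≤ _ := Finset.prod_le_prod' fun j _ => h1 j
  rw [← ENNReal.ofReal_prod_of_nonneg (fun j _ => Finset.prod_nonneg fun i _ => by have := hw (σ (i.castSucc + j)); have := hw (σ (i.succ + j)); positivity)] at h2
  have h3 : ∏ j : Fin (m+1), ∏ i : Fin m, (Cg d γ * (w (σ (i.castSucc + j)) * w (σ (i.succ + j)) / μb)) =
      (Cg d γ / μb) ^ (m * (m+1)) * (∏ i, w i) ^ (2 * m) := by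
    have : ∀ (i : Fin m) (j : Fin (m+1)), Cg d γ * (w (σ (i.castSucc + j)) * w (σ (i.succ + j)) / μb) =
      (Cg d γ / μb) * (w (σ (i.castSucc + j)) * w (σ (i.succ + j))) := fun i j => by ring
    simp_rw [this]
    rw [← path_rot_prod σ w]
    simp_rw [Finset.prod_mul_distrib]
    simp only [Finset.prod_const, Finset.card_univ, Fintype.card_fin, pow_mul]
  have hP : 0 < ∏ i, w i := Finset.prod_pos fun i _ => hw i
  have h4 : Gm γ μb d m w = ENNReal.ofReal ((Cg d γ / μb) ^ m * (∏ i, w i) ^ (2 * (m:ℝ) / (m+1))) := by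
    unfold Gm
    rw [ENNReal.ofReal_mul (by positivity), ← ENNReal.ofReal_prod_of_nonneg (fun i _ => Real.rpow_nonneg (hw i).le _),
      Real.finsetProd_rpow _ _ (fun i _ => (hw i).le)]
  have h5 : ENNReal.ofReal ((Cg d γ / μb) ^ (m * (m+1)) * (∏ i, w i) ^ (2 * m)) = Gm γ μb d m w ^ (m+1) := by
    rw [h4, ← ENNReal.ofReal_pow (by positivity), mul_pow, ← pow_mul, ← Real.rpow_natCast (_ ^ (2 * (m:ℝ) / (m+1))), ← Real.rpow_mul hP.le]
    congr 2
    rw [← Real.rpow_natCast]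
    congr 1
    push_cast; field_simp
  rw [h3, h5] at h2
  exact (ENNReal.pow_le_pow_left_iff (by omega)).mp h2

theorem Gm_meas (γ μb : ℝ) (d m : ℕ) : Measurable (Gm γ μb d m) := by
  unfold Gm; fun_prop

theorem Gm_int {τ c : ℝ} {γ μb : ℝ} {d m : ℕ} (μW : Measure ℝ) [IsProbabilityMeasure μW] (hW : WeightTail τ c μW)
    (hm : 0 < m) (hk : ((m:ℝ)+1) * (3 - τ) < 2) :
    ∫⁻ w, Gm γ μb d m w ∂(Measure.pi fun _ => μW) < ⊤ := by
  unfold Gm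
  rw [lintegral_const_mul _ (by fun_prop), lintegral_pi_prod μW (fun _ x => ENNReal.ofReal (x ^ (2 * (m:ℝ) / (m+1)))) (fun _ => by fun_prop)]
  apply ENNReal.mul_lt_top ENNReal.ofReal_lt_top
  apply ENNReal.prod_lt_top
  intro i _
  have : (0:ℝ) < m := by exact_mod_cast hm
  apply w_moment hW (by positivity)
  rw [div_lt_iff₀ (by positivity)]
  linarith

def PatS (s : StarKind) {k : ℕ} (H : SimpleGraph (Fin k)) (γ μb : ℝ) (d : ℕ) (N : ℝ) : Set (GirgΩ d k) :=
  {p | PatD s H γ μb d p.1 (fun i j => N * dist (p.2.1 i) (p.2.1 j)) p.2.2}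

def ClS (k d : ℕ) (N R : ℝ) : Set (GirgΩ d k) := {p | ∀ i j, N * dist (p.2.1 i) (p.2.1 j) ≤ R}

theorem PatS_meas (s : StarKind) {k : ℕ} (H : SimpleGraph (Fin k)) (γ μb : ℝ) (d : ℕ) (N : ℝ) :
    MeasurableSet (PatS s H γ μb d N) := by
  have h : Measurable (fun p : GirgΩ d k => (p.1, (fun i j => N * dist (p.2.1 i) (p.2.1 j)), p.2.2)) := by
    refine Measurable.prodMk (by fun_prop) (Measurable.prodMk ?_ (by fun_prop))
    refine measurable_pi_lambda _ fun i => measurable_pi_lambda _ fun j => ?_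
    fun_prop
  exact h (PatD_meas s H γ μb d)

theorem ClS_meas (k d : ℕ) (N R : ℝ) : MeasurableSet (ClS k d N R) := by
  unfold ClS
  simp only [Set.ofPred_forall]
  refine MeasurableSet.iInter fun i => MeasurableSet.iInter fun j => ?_
  apply measurableSet_le <;> fun_prop

theorem girg_apply (μW : Measure ℝ) [IsProbabilityMeasure μW] (d k : ℕ) (S : Set (GirgΩ d k)) (hS : MeasurableSet S) :
    girgMeasure μW d k S = ∫⁻ w, ∫⁻ x, coinPi k {c | (w, x, c) ∈ S} ∂(Measure.pi fun _ => volume) ∂(Measure.pi fun _ => μW) := by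
  unfold girgMeasure
  rw [Measure.prod_apply hS]
  apply lintegral_congr
  intro w
  rw [Measure.prod_apply (measurable_prodMk_left hS)]
  rfl

theorem ae_w_ge_one {τ c : ℝ} {μW : Measure ℝ} [IsProbabilityMeasure μW] (hW : WeightTail τ c μW) (k : ℕ) :
    ∀ᵐ w ∂(Measure.pi fun _ : Fin k => μW), ∀ i, 1 ≤ w i := by
  rw [ae_all_iff]
  intro i
  exact (Measure.quasiMeasurePreserving_eval (fun _ : Fin k => μW) i).ae (w_ge_one hW)

theorem pat_mass {m d : ℕ} (hd : 1 ≤ d) {τ c γ μb N : ℝ} (hγ : 1 < γ) (hμ : 0 < μb) (hN : 0 < N)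
    (μW : Measure ℝ) [IsProbabilityMeasure μW] (hW : WeightTail τ c μW)
    (s : StarKind) (H : SimpleGraph (Fin (m+1)))
    (σ : Equiv.Perm (Fin (m+1))) (hσ : ∀ i, H.Adj (σ i) (σ (i+1))) :
    ENNReal.ofReal (N ^ (d * m)) * girgMeasure μW d (m+1) (PatS s H γ μb d N) ≤
      ∫⁻ w, Gm γ μb d m w ∂(Measure.pi fun _ => μW) := by
  rw [girg_apply μW d _ _ (PatS_meas s H γ μb d N), ← lintegral_const_mul' _ _ ENNReal.ofReal_ne_top]
  apply lintegral_mono_ae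
  filter_upwards [ae_w_ge_one hW (m+1)] with w hw
  exact Qs_le hd hγ hμ hN s H w (fun i => one_pos.trans_le (hw i)) σ hσ

def K2b {m : ℕ} (γ μb : ℝ) (d : ℕ) (ρ : Fin (m+1) → Fin (m+1)) (R : ℝ) (w : Fin (m+1) → ℝ) : ENNReal :=
  ∑ i1 : Fin m, ENNReal.ofReal (∏ i : Fin m, (if i = i1 then
        tailB d γ (w (ρ i.castSucc) * w (ρ i.succ) / μb) (R / (2 * (m+1))) else
        Cg d γ * (w (ρ i.castSucc) * w (ρ i.succ) / μb)))

theorem K2b_meas {m : ℕ} (γ μb : ℝ) (d : ℕ) (ρ : Fin (m+1) → Fin (m+1)) (R : ℝ) : Measurable (K2b γ μb d ρ R) := by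
  unfold K2b
  refine Finset.measurable_sum _ fun i1 _ => Measurable.ennreal_ofReal (Finset.measurable_prod _ fun i _ => ?_)
  unfold tailB
  split_ifs <;> fun_prop

theorem K2b_tendsto {m d : ℕ} (hd : 1 ≤ d) {γ μb : ℝ} (hγ : 1 < γ) (hμ : 0 < μb) (ρ : Fin (m+1) → Fin (m+1))
    (w : Fin (m+1) → ℝ) (hw : ∀ i, 0 < w i) :
    Tendsto (fun R : ℕ => K2b γ μb d ρ R w) atTop (nhds 0) := by
  unfold K2b
  have : (0:ENNReal) = ∑ i1 : Fin m, ENNReal.ofReal 0 := by simp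
  rw [this]
  apply tendsto_finsetSum
  intro i1 _
  apply ENNReal.tendsto_ofReal
  have h0 : (0:ℝ) = ∏ i : Fin m, (if i = i1 then 0 else Cg d γ * (w (ρ i.castSucc) * w (ρ i.succ) / μb)) :=
    (Finset.prod_eq_zero (Finset.mem_univ i1) (by simp)).symm
  rw [h0]
  apply tendsto_finsetProd
  intro i _
  split_ifs
  · refine (tailB_tendsto hd hγ (div_pos (mul_pos (hw _) (hw _)) hμ)).comp ?_
    exact tendsto_natCast_atTop_atTop.atTop_div_const (by positivity)
  · exact tendsto_const_nhds

def epsR {m : ℕ} (μW : Measure ℝ) (γ μb : ℝ) (d : ℕ) (ρ : Fin (m+1) → Fin (m+1)) (R : ℕ) : ENNReal :=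
  ∫⁻ w, min (Gm γ μb d m w) (K2b γ μb d ρ R w) ∂(Measure.pi fun _ => μW)

theorem epsR_tendsto {m d : ℕ} (hd : 1 ≤ d) {τ c γ μb : ℝ} (hγ : 1 < γ) (hμ : 0 < μb)
    (μW : Measure ℝ) [IsProbabilityMeasure μW] (hW : WeightTail τ c μW) (hm : 0 < m) (hk : ((m:ℝ)+1) * (3 - τ) < 2)
    (ρ : Fin (m+1) → Fin (m+1)) : Tendsto (epsR μW γ μb d ρ) atTop (nhds 0) := by
  unfold epsR
  have h := tendsto_lintegral_of_dominated_convergence (μ := Measure.pi fun _ : Fin (m+1) => μW)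
    (F := fun (R:ℕ) w => min (Gm γ μb d m w) (K2b γ μb d ρ R w)) (f := fun _ => 0) (Gm γ μb d m)
    (fun R => (Gm_meas γ μb d m).min (K2b_meas γ μb d ρ R))
    (fun R => ae_of_all _ fun w => min_le_left _ _)
    (Gm_int μW hW hm hk).ne (by
      filter_upwards [ae_w_ge_one hW (m+1)] with w hw
      exact tendsto_of_tendsto_of_tendsto_of_le_of_le tendsto_const_nhds
        (K2b_tendsto hd hγ hμ ρ w (fun i => one_pos.trans_le (hw i))) (fun _ => zero_le) (fun R => min_le_right _ _))
  simpa using h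

theorem far_mass {m d : ℕ} (hd : 1 ≤ d) {τ c γ μb N : ℝ} (hγ : 1 < γ) (hμ : 0 < μb) (hN : 0 < N)
    (μW : Measure ℝ) [IsProbabilityMeasure μW] (hW : WeightTail τ c μW)
    (s : StarKind) (H : SimpleGraph (Fin (m+1)))
    (σ : Equiv.Perm (Fin (m+1))) (hσ : ∀ i, H.Adj (σ i) (σ (i+1))) (R : ℕ) (hR : 0 < R) :
    ENNReal.ofReal (N ^ (d * m)) * girgMeasure μW d (m+1) (PatS s H γ μb d N \ ClS (m+1) d N R) ≤
      epsR μW γ μb d σ R := by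
  rw [girg_apply μW d _ _ ((PatS_meas s H γ μb d N).diff (ClS_meas _ d N R)), ← lintegral_const_mul' _ _ ENNReal.ofReal_ne_top]
  apply lintegral_mono_ae
  filter_upwards [ae_w_ge_one hW (m+1)] with w hw
  have hw0 : ∀ i, 0 < w i := (fun i => one_pos.trans_le (hw i))
  apply le_min
  · refine le_trans ?_ (Qs_le hd hγ hμ hN s H w hw0 σ hσ)
    unfold Qs
    gcongr with x
    exact fun hc => hc.1
  · have hR' : (0:ℝ) < R := by exact_mod_cast hR
    have h := K2 hd hγ hμ hN hR' s H w hw0 σ σ.injective (fun i => by simpa using ham_path hσ 0 i)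
    refine h.trans (le_of_eq ?_)
    unfold K2b
    apply Finset.sum_congr rfl
    intro i1 _
    rw [ENNReal.ofReal_prod_of_nonneg]
    intro i _
    have := hw0 (σ i.castSucc); have := hw0 (σ i.succ); have := Cg_pos d hγ
    unfold tailB
    split_ifs <;> positivity

def IR (s : StarKind) {m : ℕ} (H : SimpleGraph (Fin (m+1))) (μW : Measure ℝ) (γ μb : ℝ) (d : ℕ) (R : ℝ) : ENNReal :=
  ∫⁻ w, ∫⁻ y : Fin m → Fin d → ℝ, coinPi (m+1) {c | PatD s H γ μb d w (fun i j => dist (cz y i) (cz y j)) c ∧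
    ∀ i j, dist (cz y i) (cz y j) ≤ R} ∂volume ∂(Measure.pi fun _ => μW)

theorem close_mass {m d : ℕ} {γ μb N R : ℝ} (hN : 0 < N) (hNR : 4 * R < N)
    (μW : Measure ℝ) [IsProbabilityMeasure μW] (s : StarKind) (H : SimpleGraph (Fin (m+1))) :
    ENNReal.ofReal (N ^ (d * m)) * girgMeasure μW d (m+1) (PatS s H γ μb d N ∩ ClS (m+1) d N R) =
      IR s H μW γ μb d R := by
  rw [girg_apply μW d _ _ ((PatS_meas s H γ μb d N).inter (ClS_meas _ d N R)), ← lintegral_const_mul' _ _ ENNReal.ofReal_ne_top]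
  unfold IR
  apply lintegral_congr
  intro w
  have h := spatial_scale (m := m) (d := d) (fun D => coinPi (m+1) {c | PatD s H γ μb d w D c ∧ ∀ i j, D i j ≤ R}) (by
      have h1 : MeasurableSet {p : (Fin (m+1) → Fin (m+1) → ℝ) × (Sym2 (Fin (m+1)) → ℝ) | PatD s H γ μb d w p.1 p.2 ∧ ∀ i j, p.1 i j ≤ R} := by
        refine MeasurableSet.inter (s₁ := {p : (Fin (m+1) → Fin (m+1) → ℝ) × (Sym2 (Fin (m+1)) → ℝ) | PatD s H γ μb d w p.1 p.2}) (s₂ := {p : (Fin (m+1) → Fin (m+1) → ℝ) × (Sym2 (Fin (m+1)) → ℝ) | ∀ i j, p.1 i j ≤ R}) ?_ ?_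
        · exact measurable_prodMk_left (x := w) (PatD_meas s H γ μb d)
        · simp only [Set.ofPred_forall]
          refine MeasurableSet.iInter fun i => MeasurableSet.iInter fun j => ?_
          apply measurableSet_le <;> fun_prop
      exact measurable_measure_prodMk_left h1) R N (by
      rintro D ⟨i, j, hij⟩
      have : {c | PatD s H γ μb d w D c ∧ ∀ i j, D i j ≤ R} = ∅ := by
        ext c
        simp only [Set.mem_ofPred_eq, Set.mem_empty_iff_false, iff_false, not_and]
        intro _ h
        exact absurd (h i j) (not_le.mpr hij)
      simp only [this, measure_empty]) hN hNR
  exact h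

theorem IR_mono (s : StarKind) {m : ℕ} (H : SimpleGraph (Fin (m+1))) (μW : Measure ℝ) (γ μb : ℝ) (d : ℕ) :
    Monotone (IR s H μW γ μb d) := by
  intro R R' h
  unfold IR
  apply lintegral_mono; intro w
  apply lintegral_mono; intro y
  apply measure_mono
  exact fun c hc => ⟨hc.1, fun i j => (hc.2 i j).trans h⟩

theorem IR_le {m d : ℕ} (hd : 1 ≤ d) {τ c γ μb : ℝ} (hγ : 1 < γ) (hμ : 0 < μb)
    (μW : Measure ℝ) [IsProbabilityMeasure μW] (hW : WeightTail τ c μW)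
    (s : StarKind) (H : SimpleGraph (Fin (m+1)))
    (σ : Equiv.Perm (Fin (m+1))) (hσ : ∀ i, H.Adj (σ i) (σ (i+1))) (R : ℝ) :
    IR s H μW γ μb d R ≤ ∫⁻ w, Gm γ μb d m w ∂(Measure.pi fun _ => μW) := by
  have hN : 0 < |4 * R| + 1 := by positivity
  rw [← close_mass (N := |4 * R| + 1) (R := R) hN (by have := le_abs_self (4 * R); linarith) μW s H]
  refine le_trans ?_ (pat_mass hd hγ hμ hN μW hW s H σ hσ)
  gcongr
  exact Set.inter_subset_left

theorem exists_M {τ c : ℝ} {μW : Measure ℝ} [IsProbabilityMeasure μW] (hW : WeightTail τ c μW) :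
    ∃ M : ℝ, 1 ≤ M ∧ 0 < μW (Set.Icc 1 M) := by
  by_contra hcon
  push Not at hcon
  have h : ∀ n : ℕ, μW (Set.Icc 1 ((n:ℝ)+1)) = 0 := fun n => le_antisymm (hcon _ (by have := n.cast_nonneg (α := ℝ); linarith)) zero_le
  have h2 : μW (⋃ n : ℕ, Set.Icc 1 ((n:ℝ)+1)) = 0 := measure_iUnion_null h
  have h3 : μW Set.univ = 0 := by
    have : (Set.univ : Set ℝ) ⊆ Set.Iio 1 ∪ ⋃ n : ℕ, Set.Icc 1 ((n:ℝ)+1) := by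
      intro x _
      by_cases hx : x < 1
      · exact Or.inl hx
      · right
        obtain ⟨n, hn⟩ := exists_nat_ge x
        exact Set.mem_iUnion.mpr ⟨n, not_lt.mp hx, by linarith⟩
    exact measure_mono_null this (measure_union_null hW.2.1 h2)
  simp at h3

theorem edgeF_bounds {γ A D A1 A2 a b : ℝ} {d : ℕ} (hγ : 1 < γ) (hA1 : 0 < A1) (h1 : A1 ≤ A) (h2 : A ≤ A2)
    (ha : 0 < a) (haD : a ≤ D) (hDb : D ≤ b) :
    edgeF γ A1 d b ≤ edgeF γ A d D ∧ edgeF γ A d D ≤ edgeF γ A2 d a := by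
  have hA : 0 < A := hA1.trans_le h1
  have hD : 0 < D := ha.trans_le haD
  have hb : 0 < b := hD.trans_le hDb
  have hA2 : 0 < A2 := hA.trans_le h2
  unfold edgeF
  constructor <;> gcongr

theorem IR_pos {m d : ℕ} (hd : 1 ≤ d) {τ c γ μb : ℝ} (hγ : 1 < γ) (hμ : 0 < μb)
    (μW : Measure ℝ) [IsProbabilityMeasure μW] (hW : WeightTail τ c μW)
    (s : StarKind) (H : SimpleGraph (Fin (m+1))) :
    ∃ R : ℕ, 0 < IR s H μW γ μb d R := by
  classical
  obtain ⟨M, hM1, hM⟩ := exists_M hW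
  set a : ℝ := M ^ 2 / μb + 1 with ha
  have haM : 0 < M ^ 2 / μb := by positivity
  have ha1 : 1 < a := by linarith
  set L : ℝ := a + 2 with hL
  set b : ℝ := m * L + 2 with hb
  obtain ⟨R, hR⟩ := exists_nat_ge b
  refine ⟨R, ?_⟩
  have : Nonempty (Fin d) := ⟨⟨0, by omega⟩⟩
  set plo := edgeF γ (1 / μb) d b with hplo
  set phi := edgeF γ (M ^ 2 / μb) d a with hphi
  have hL0 : 0 < L := by linarith
  have hb0 : 0 < b := by positivity
  have hplo0 : 0 < plo := by
    rw [hplo]; unfold edgeF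
    exact lt_min one_pos (by positivity)
  have hplo1 : plo ≤ 1 := min_le_left _ _
  have hphi1 : phi < 1 := by
    rw [hphi]; unfold edgeF
    refine (min_le_right _ _).trans_lt (Real.rpow_lt_one (by positivity) ?_ (by linarith))
    rw [div_lt_one (by positivity)]
    calc M ^ 2 / μb < a := by linarith
      _ ≤ a ^ d := le_self_pow₀ ha1.le (by omega)
  have hphi0 : 0 ≤ phi := by
    rw [hphi]; unfold edgeF; positivity
  set P : Fin (m+1) → Fin d → ℝ := fun i _ => i.val * L with hP
  have hPd : ∀ i j, dist (P i) (P j) = |(i.val:ℝ) - j.val| * L := by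
    intro i j
    rw [dist_eq_norm]
    have : P i - P j = fun _ => (((i.val:ℝ) - j.val) * L) := by ext; simp [hP]; ring
    rw [this, pi_norm_const, Real.norm_eq_abs, abs_mul, abs_of_pos hL0]
  set Bw : Set (Fin (m+1) → ℝ) := Set.univ.pi fun _ => Set.Icc 1 M with hBw
  set By : Set (Fin m → Fin d → ℝ) := Metric.closedBall (fun i => P i.succ) 1 with hBy
  set Bc : Set (Sym2 (Fin (m+1)) → ℝ) := Set.univ.pi fun e => if e ∈ H.edgeSet then Set.Icc 0 plo else Set.Ioc phi 1 with hBc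
  have key : ∀ w ∈ Bw, ∀ y ∈ By, Bc ⊆ {c | PatD s H γ μb d w (fun i j => dist (cz y i) (cz y j)) c ∧
    ∀ i j, dist (cz y i) (cz y j) ≤ (R:ℝ)} := by
    intro w hw y hy cc hc
    have hcl : ∀ i, dist (cz y i) (P i) ≤ 1 := by
      intro i
      refine Fin.cases ?_ (fun j => ?_) i
      · have : P 0 = 0 := by ext; simp [hP]
        simp [cz, this]
      · have := (dist_le_pi_dist y (fun i => P i.succ) j).trans hy
        simpa [cz] using this
    have hup : ∀ i j, dist (cz y i) (cz y j) ≤ b := by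
      intro i j
      have h1 := dist_triangle4 (cz y i) (P i) (P j) (cz y j)
      have h2 := hcl i; have h3 := hcl j; rw [dist_comm] at h3
      have h4 : |(i.val:ℝ) - j.val| ≤ m := by
        have hi : (i.val:ℝ) ≤ m := by exact_mod_cast Nat.lt_succ_iff.mp i.isLt
        have hj : (j.val:ℝ) ≤ m := by exact_mod_cast Nat.lt_succ_iff.mp j.isLt
        have := (i.val).cast_nonneg (α := ℝ); have := (j.val).cast_nonneg (α := ℝ)
        rw [abs_le]; constructor <;> linarith
      have h5 := mul_le_mul_of_nonneg_right h4 hL0.le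
      rw [hPd] at h1
      linarith
    have hlo : ∀ i j, i ≠ j → a ≤ dist (cz y i) (cz y j) := by
      intro i j hij
      have h1 := dist_triangle4 (P i) (cz y i) (cz y j) (P j)
      have h2 := hcl i; have h3 := hcl j; rw [dist_comm] at h2
      have h4 : 1 ≤ |(i.val:ℝ) - j.val| := by
        have : (i.val:ℤ) - j.val ≠ 0 := by
          intro h; apply hij; ext; omega
        have := Int.one_le_abs this
        exact_mod_cast this
      have h5 := mul_le_mul_of_nonneg_right h4 hL0.le
      rw [hPd] at h1
      linarith
    have hE : ∀ i j, i ≠ j → plo ≤ edgeF γ (w i * w j / μb) d (dist (cz y i) (cz y j)) ∧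
        edgeF γ (w i * w j / μb) d (dist (cz y i) (cz y j)) ≤ phi := by
      intro i j hij
      have hi := hw i trivial; have hj := hw j trivial
      refine edgeF_bounds hγ (by positivity) ?_ ?_ (by linarith) (hlo i j hij) (hup i j)
      · gcongr; nlinarith [hi.1, hj.1]
      · gcongr; nlinarith [hi.1, hj.1, hi.2, hj.2]
    have hA : ∀ i j, H.Adj i j → cc s(i, j) ≤ edgeF γ (w i * w j / μb) d (dist (cz y i) (cz y j)) := by
      intro i j hij
      have := hc s(i, j) trivial
      beta_reduce at this
      rw [if_pos (by simpa using hij)] at this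
      exact this.2.trans (hE i j hij.ne).1
    have hA' : ∀ i j, i ≠ j → ¬ H.Adj i j → ¬ cc s(i, j) ≤ edgeF γ (w i * w j / μb) d (dist (cz y i) (cz y j)) := by
      intro i j hne hij
      have := hc s(i, j) trivial
      beta_reduce at this
      rw [if_neg (by simpa using hij)] at this
      exact not_le.mpr ((hE i j hne).2.trans_lt this.1)
    refine ⟨?_, fun i j => (hup i j).trans hR⟩
    cases s with
    | sub => exact hA
    | ind =>
      intro i j hij
      exact ⟨hA i j, fun h => by by_contra hn; exact hA' i j hij hn h⟩
  have hBc0 : 0 < coinPi (m+1) Bc := by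
    rw [hBc, Measure.pi_pi]
    apply pos_of_ne_zero
    rw [Finset.prod_ne_zero_iff]
    intro e _
    split_ifs
    · rw [Measure.restrict_apply measurableSet_Icc, Set.inter_eq_left.mpr (Set.Icc_subset_Icc_right hplo1), Real.volume_Icc]
      simpa using hplo0
    · rw [Measure.restrict_apply measurableSet_Ioc, Set.inter_eq_left.mpr (show Set.Ioc phi 1 ⊆ Set.Icc 0 1 from fun x hx => ⟨hphi0.trans hx.1.le, hx.2⟩), Real.volume_Ioc]
      simpa using hphi1
  have hBw0 : 0 < (Measure.pi fun _ : Fin (m+1) => μW) Bw := by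
    rw [hBw, Measure.pi_pi]
    apply pos_of_ne_zero
    rw [Finset.prod_ne_zero_iff]
    exact fun _ _ => hM.ne'
  have hBy0 : 0 < volume By := Metric.measure_closedBall_pos _ _ one_pos
  have hBwm : MeasurableSet Bw := MeasurableSet.univ_pi fun _ => measurableSet_Icc
  have hBym : MeasurableSet By := Metric.isClosed_closedBall.measurableSet
  calc 0 < (coinPi (m+1) Bc * volume By) * (Measure.pi fun _ : Fin (m+1) => μW) Bw := by
        apply pos_of_ne_zero
        exact mul_ne_zero (mul_ne_zero hBc0.ne' hBy0.ne') hBw0.ne'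
    _ = ∫⁻ w in Bw, ∫⁻ y in By, coinPi (m+1) Bc ∂volume ∂(Measure.pi fun _ => μW) := by
        rw [setLIntegral_const, setLIntegral_const]
    _ ≤ IR s H μW γ μb d R := by
        unfold IR
        refine (setLIntegral_mono' hBwm (fun w hw => ?_)).trans (setLIntegral_le_lintegral _ _)
        refine (setLIntegral_mono' hBym (fun y hy => ?_)).trans (setLIntegral_le_lintegral _ _)
        exact measure_mono (key w hw y hy)

def gst (R r : ℝ) : ENNReal := ENNReal.ofReal (if r ≤ R then Real.exp 1 else 1)

theorem gst_meas (R : ℝ) : Measurable (gst R) := by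
  unfold gst
  exact Measurable.ennreal_ofReal (Measurable.ite measurableSet_Iic measurable_const measurable_const)

theorem gst_int {d : ℕ} {N R nn : ℝ} (hN : 0 < N) (hNn : N ^ d = nn) (hR : 0 ≤ R) (a : Torus d) :
    ∫⁻ t : Torus d, gst R (N * dist t a) ≤ ENNReal.ofReal (Real.exp ((Real.exp 1 - 1) * (2 * R) ^ d / nn)) := by
  have he : 0 ≤ Real.exp 1 - 1 := by have := Real.add_one_le_exp 1; linarith
  have hms : MeasurableSet {t : Torus d | dist t a ≤ R / N} := by apply measurableSet_le <;> fun_prop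
  have h1 : ∀ t : Torus d, gst R (N * dist t a) = 1 + Set.indicator {t : Torus d | dist t a ≤ R / N}
      (fun _ => ENNReal.ofReal (Real.exp 1 - 1)) t := by
    intro t
    have : (N * dist t a ≤ R) ↔ dist t a ≤ R / N := by rw [le_div_iff₀ hN, mul_comm]
    unfold gst
    by_cases h : dist t a ≤ R / N
    · rw [if_pos (this.mpr h), Set.indicator_of_mem (by exact h), ← ENNReal.ofReal_one, ← ENNReal.ofReal_add (by norm_num) he]
      congr 1; ring
    · rw [if_neg (fun h' => h (this.mp h')), Set.indicator_of_notMem (by exact h)]; simp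
  simp_rw [h1]
  rw [lintegral_add_left measurable_const, lintegral_indicator_const hms]
  simp only [lintegral_const, measure_univ, mul_one]
  have h2 := torus_ball a (t := R / N) (by positivity)
  calc _ ≤ 1 + ENNReal.ofReal (Real.exp 1 - 1) * ENNReal.ofReal ((2 * (R / N)) ^ d) := by gcongr
    _ = ENNReal.ofReal (1 + (Real.exp 1 - 1) * (2 * (R / N)) ^ d) := by
        rw [← ENNReal.ofReal_mul he, ENNReal.ofReal_add (by norm_num) (by positivity), ENNReal.ofReal_one]
    _ ≤ _ := by
        apply ENNReal.ofReal_le_ofReal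
        have : (2 * (R / N)) ^ d = (2 * R) ^ d / nn := by rw [← hNn, ← div_pow]; congr 1; ring
        rw [this, ← mul_div_assoc]
        have := Real.add_one_le_exp ((Real.exp 1 - 1) * (2 * R) ^ d / nn)
        linarith

def Kc (d : ℕ) (R : ℝ) : ℝ := Real.exp 1 * Real.exp ((Real.exp 1 - 1) * (2 * R) ^ d)

theorem ball_exp {d n : ℕ} (hn : 0 < n) {N R : ℝ} (hN : 0 < N) (hNn : N ^ d = n) (hR : 0 ≤ R) (z : Fin n) :
    ∫⁻ x : Fin n → Torus d, ∏ y, gst R (N * dist (x y) (x z)) ∂(Measure.pi fun _ => volume) ≤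
      ENNReal.ofReal (Kc d R) := by
  obtain ⟨n, rfl⟩ : ∃ n', n = n' + 1 := ⟨n - 1, by omega⟩
  have he : 0 ≤ Real.exp 1 - 1 := by have := Real.add_one_le_exp 1; linarith
  have hgm := gst_meas R
  have hmp := measurePreserving_piFinSuccAbove (fun _ : Fin (n+1) => (volume : Measure (Torus d))) z
  have h1 : ∀ x : Fin (n+1) → Torus d, ∏ y, gst R (N * dist (x y) (x z)) =
      (fun p : Torus d × (Fin n → Torus d) => gst R 0 * ∏ j, gst R (N * dist (p.2 j) p.1))
        (MeasurableEquiv.piFinSuccAbove (fun _ => Torus d) z x) := by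
    intro x
    rw [Fin.prod_univ_succAbove _ z]
    simp [MeasurableEquiv.piFinSuccAbove, Fin.insertNthEquiv, Fin.removeNth]
  rw [lintegral_congr h1]
  rw [hmp.lintegral_comp (f := fun p : Torus d × (Fin n → Torus d) => gst R 0 * ∏ j, gst R (N * dist (p.2 j) p.1)) (by fun_prop), lintegral_prod _ (by fun_prop)]
  calc _ ≤ ∫⁻ a : Torus d, ENNReal.ofReal (Kc d R) := by
        apply lintegral_mono
        intro a
        dsimp only
        rw [lintegral_const_mul _ (by fun_prop), lintegral_pi_prod volume (fun _ t => gst R (N * dist t a)) (fun _ => by fun_prop)]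
        calc _ ≤ ENNReal.ofReal (Real.exp 1) * ∏ j : Fin n, ENNReal.ofReal (Real.exp ((Real.exp 1 - 1) * (2 * R) ^ d / (n+1:ℕ))) := by
              gcongr
              · unfold gst; rw [if_pos hR]
              · exact gst_int hN hNn hR a
          _ ≤ _ := by
              rw [Finset.prod_const, ← ENNReal.ofReal_pow (by positivity), ← ENNReal.ofReal_mul (by positivity)]
              apply ENNReal.ofReal_le_ofReal
              unfold Kc
              rw [← Real.exp_nat_mul]
              refine mul_le_mul_of_nonneg_left (Real.exp_le_exp.mpr ?_) (Real.exp_pos 1).le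
              simp only [Finset.card_univ, Fintype.card_fin]
              have h0 : 0 ≤ (Real.exp 1 - 1) * (2 * R) ^ d := by positivity
              rw [← mul_div_assoc, div_le_iff₀ (by positivity), mul_comm]
              push_cast
              nlinarith
    _ = _ := by simp

def Bz {d n : ℕ} (N R : ℝ) (x : Fin n → Torus d) (z : Fin n) : Finset (Fin n) :=
  open scoped Classical in univ.filter fun y => N * dist (x y) (x z) ≤ R

theorem Bz_pow {d n : ℕ} (N R : ℝ) (x : Fin n → Torus d) (z : Fin n) (p : ℕ) :
    (((Bz N R x z).card ^ p : ℕ) : ENNReal) ≤ (p.factorial : ENNReal) * ∏ y, gst R (N * dist (x y) (x z)) := by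
  classical
  have h1 : ∏ y, gst R (N * dist (x y) (x z)) = ENNReal.ofReal (Real.exp (Bz N R x z).card) := by
    unfold gst
    rw [← ENNReal.ofReal_prod_of_nonneg (fun y _ => by split_ifs <;> positivity)]
    congr 1
    rw [Finset.prod_ite]
    simp only [Finset.prod_const, one_pow, mul_one, Bz]
    rw [← Real.exp_nat_mul, mul_one]
  rw [h1]
  have h2 := Real.pow_div_factorial_le_exp (Bz N R x z).card (by positivity) p
  rw [div_le_iff₀ (by positivity)] at h2
  rw [← ENNReal.ofReal_natCast, ← ENNReal.ofReal_natCast, ← ENNReal.ofReal_mul (by positivity)]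
  apply ENNReal.ofReal_le_ofReal
  push_cast
  linarith

def cnt {d k n : ℕ} (S : Set (GirgΩ d k)) (ω : GirgΩ d n) : ℝ :=
  ∑ v : Fin k ↪ Fin n, Set.indicator (restr v ⁻¹' S) (fun _ => (1:ℝ)) ω

theorem restr_meas {d k n : ℕ} (v : Fin k → Fin n) : Measurable (restr v : GirgΩ d n → GirgΩ d k) := by
  unfold restr; fun_prop

theorem restr_prob (μW : Measure ℝ) [IsProbabilityMeasure μW] {d k n : ℕ} {S : Set (GirgΩ d k)} (hS : MeasurableSet S) (v : Fin k ↪ Fin n) :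
    girgMeasure μW d n (restr v ⁻¹' S) = girgMeasure μW d k S :=
  (mp_restr μW v v.injective).measure_preimage hS.nullMeasurableSet

theorem cnt_mean (μW : Measure ℝ) [IsProbabilityMeasure μW] {d k n : ℕ} {S : Set (GirgΩ d k)} (hS : MeasurableSet S) :
    ∫ ω, cnt S ω ∂(girgMeasure μW d n) = n.descFactorial k * (girgMeasure μW d k).real S := by
  unfold cnt
  rw [integral_finsetSum _ (fun (v : Fin k ↪ Fin n) _ => (integrable_const (1:ℝ)).indicator (restr_meas v hS))]
  have : ∀ v : Fin k ↪ Fin n, ∫ ω, Set.indicator (restr v ⁻¹' S) (fun _ => (1:ℝ)) ω ∂(girgMeasure μW d n) = (girgMeasure μW d k).real S := by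
    intro v
    rw [integral_indicator_const _ (restr_meas v hS)]
    simp [Measure.real, restr_prob μW hS v]
  simp_rw [this]
  simp [Fintype.card_embedding_eq]

theorem lcnt_mean (μW : Measure ℝ) [IsProbabilityMeasure μW] {d k n : ℕ} {S : Set (GirgΩ d k)} (hS : MeasurableSet S) :
    ∫⁻ ω, ENNReal.ofReal (cnt S ω) ∂(girgMeasure μW d n) = n.descFactorial k * girgMeasure μW d k S := by
  have h : ∀ ω : GirgΩ d n, ENNReal.ofReal (cnt S ω) = ∑ v : Fin k ↪ Fin n, Set.indicator (restr v ⁻¹' S) (fun _ => (1:ENNReal)) ω := by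
    intro ω
    unfold cnt
    rw [ENNReal.ofReal_sum_of_nonneg (fun v _ => Set.indicator_nonneg (fun _ _ => zero_le_one) _)]
    apply Finset.sum_congr rfl
    intro v _
    simp only [Set.indicator]; split_ifs <;> simp
  simp_rw [h]
  rw [lintegral_finsetSum _ (fun (v : Fin k ↪ Fin n) _ => measurable_const.indicator (restr_meas v hS))]
  have : ∀ v : Fin k ↪ Fin n, ∫⁻ ω, Set.indicator (restr v ⁻¹' S) (fun _ => (1:ENNReal)) ω ∂(girgMeasure μW d n) = girgMeasure μW d k S := by
    intro v
    rw [lintegral_indicator_const (restr_meas v hS), restr_prob μW hS v, one_mul]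
  simp_rw [this]
  simp [Fintype.card_embedding_eq]

theorem mp_pos (μW : Measure ℝ) [IsProbabilityMeasure μW] (d n : ℕ) :
    MeasurePreserving (fun ω : GirgΩ d n => ω.2.1) (girgMeasure μW d n) (Measure.pi fun _ => volume) := by
  unfold girgMeasure
  exact measurePreserving_fst.comp measurePreserving_snd

open scoped Classical in
def ndP (k n : ℕ) : Finset ((Fin k ↪ Fin n) × (Fin k ↪ Fin n)) :=
  univ.filter fun p => ¬ ∀ i j, p.1 i ≠ p.2 j

theorem nd_pointwise {d k n : ℕ} {N R : ℝ} {S : Set (GirgΩ d k)} (hSC : S ⊆ ClS k d N R) (ω : GirgΩ d n) :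
    ∑ p ∈ ndP k n, Set.indicator (restr p.1 ⁻¹' S ∩ restr p.2 ⁻¹' S) (fun _ => (1:ENNReal)) ω ≤
      ∑ z : Fin n, (((Bz N R ω.2.1 z).card ^ (2 * k) : ℕ) : ENNReal) := by
  classical
  have h1 : ∑ p ∈ ndP k n, Set.indicator (restr p.1 ⁻¹' S ∩ restr p.2 ⁻¹' S) (fun _ => (1:ENNReal)) ω =
      (((ndP k n).filter fun p => ω ∈ restr p.1 ⁻¹' S ∩ restr p.2 ⁻¹' S).card : ENNReal) := by
    simp only [Set.indicator]
    rw [Finset.sum_ite]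
    simp
  rw [h1, ← Nat.cast_sum, Nat.cast_le]
  set Pz : Fin n → Finset ((Fin k ↪ Fin n) × (Fin k ↪ Fin n)) := fun z =>
    univ.filter fun p => (∀ i, p.1 i ∈ Bz N R ω.2.1 z) ∧ ∀ i, p.2 i ∈ Bz N R ω.2.1 z with hPz
  have h2 : ((ndP k n).filter fun p => ω ∈ restr p.1 ⁻¹' S ∩ restr p.2 ⁻¹' S) ⊆ univ.biUnion Pz := by
    rintro ⟨u, v⟩ hp
    simp only [ndP, Finset.mem_filter, Finset.mem_univ, true_and] at hp
    obtain ⟨hnd, hu, hv⟩ := hp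
    push Not at hnd
    obtain ⟨i, j, hij⟩ := hnd
    simp only [Finset.mem_biUnion, Finset.mem_univ, true_and, hPz, Finset.mem_filter]
    refine ⟨u i, fun a => ?_, fun a => ?_⟩
    · simp only [Bz, Finset.mem_filter, Finset.mem_univ, true_and]
      exact hSC hu a i
    · simp only [Bz, Finset.mem_filter, Finset.mem_univ, true_and]
      rw [hij]
      exact hSC hv a j
  refine (Finset.card_le_card h2).trans (Finset.card_biUnion_le.trans (Finset.sum_le_sum fun z _ => ?_))
  have h3 : (Pz z).card ≤ ((Fintype.piFinset fun _ : Fin k => Bz N R ω.2.1 z) ×ˢ (Fintype.piFinset fun _ : Fin k => Bz N R ω.2.1 z)).card := by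
    apply Finset.card_le_card_of_injOn (fun p : (Fin k ↪ Fin n) × (Fin k ↪ Fin n) => ((p.1 : Fin k → Fin n), (p.2 : Fin k → Fin n)))
    · rintro ⟨u, v⟩ hp
      simp only [hPz, Finset.coe_filter, Finset.mem_univ, true_and] at hp
      simp only [Finset.mem_coe, Finset.mem_product, Fintype.mem_piFinset]
      exact hp
    · rintro ⟨u, v⟩ _ ⟨u', v'⟩ _ h
      simpa using h
  refine h3.trans (le_of_eq ?_)
  rw [Finset.card_product, Fintype.card_piFinset]
  simp [two_mul, pow_add]

theorem nd_bound (μW : Measure ℝ) [IsProbabilityMeasure μW] {d k n : ℕ} (hn : 0 < n) {N R : ℝ} (hN : 0 < N)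
    (hNn : N ^ d = n) (hR : 0 ≤ R) {S : Set (GirgΩ d k)} (hS : MeasurableSet S) (hSC : S ⊆ ClS k d N R) :
    ∑ p ∈ ndP k n, girgMeasure μW d n (restr p.1 ⁻¹' S ∩ restr p.2 ⁻¹' S) ≤
      n * ((2 * k).factorial * ENNReal.ofReal (Kc d R)) := by
  have hgm := gst_meas R
  calc _ = ∫⁻ ω, ∑ p ∈ ndP k n, Set.indicator (restr p.1 ⁻¹' S ∩ restr p.2 ⁻¹' S) (fun _ => (1:ENNReal)) ω ∂(girgMeasure μW d n) := by
        rw [lintegral_finsetSum _ (fun p _ => measurable_const.indicator ((restr_meas p.1 hS).inter (restr_meas p.2 hS)))]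
        apply Finset.sum_congr rfl
        intro p _
        rw [lintegral_indicator_const ((restr_meas p.1 hS).inter (restr_meas p.2 hS)), one_mul]
    _ ≤ ∫⁻ ω : GirgΩ d n, ∑ z : Fin n, ((2 * k).factorial : ENNReal) * ∏ y, gst R (N * dist (ω.2.1 y) (ω.2.1 z)) ∂(girgMeasure μW d n) := by
        apply lintegral_mono
        intro ω
        exact (nd_pointwise hSC ω).trans (Finset.sum_le_sum fun z _ => Bz_pow _ _ _ _ _)
    _ = ∑ z : Fin n, ((2 * k).factorial : ENNReal) * ∫⁻ x : Fin n → Torus d, ∏ y, gst R (N * dist (x y) (x z)) ∂(Measure.pi fun _ => volume) := by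
        rw [lintegral_finsetSum _ (fun z _ => by fun_prop)]
        apply Finset.sum_congr rfl
        intro z _
        rw [lintegral_const_mul _ (by fun_prop)]
        congr 1
        exact (mp_pos μW d n).lintegral_comp (f := fun x => ∏ y, gst R (N * dist (x y) (x z))) (by fun_prop)
    _ ≤ ∑ z : Fin n, ((2 * k).factorial : ENNReal) * ENNReal.ofReal (Kc d R) := by
        gcongr with z
        exact ball_exp hn hN hNn hR z
    _ = _ := by simp

theorem cnt_memLp (μW : Measure ℝ) [IsProbabilityMeasure μW] {d k n : ℕ} {S : Set (GirgΩ d k)} (hS : MeasurableSet S) :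
    MemLp (fun ω : GirgΩ d n => cnt S ω) 2 (girgMeasure μW d n) := by
  unfold cnt
  exact memLp_finsetSum _ fun v _ => memLp_indicator_const 2 (restr_meas v hS) 1 (Or.inr (measure_ne_top _ _))

theorem cnt_var (μW : Measure ℝ) [IsProbabilityMeasure μW] {d k n : ℕ} (hn : 0 < n) {N R : ℝ} (hN : 0 < N)
    (hNn : N ^ d = n) (hR : 0 ≤ R) {S : Set (GirgΩ d k)} (hS : MeasurableSet S) (hSC : S ⊆ ClS k d N R) :
    ProbabilityTheory.variance (fun ω : GirgΩ d n => cnt S ω) (girgMeasure μW d n) ≤ n * ((2 * k).factorial * Kc d R) := by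
  classical
  have hKc : 0 ≤ Kc d R := by unfold Kc; positivity
  rw [ProbabilityTheory.variance_eq_sub (cnt_memLp μW hS), cnt_mean μW hS]
  set q := (girgMeasure μW d k).real S with hq
  set μ := girgMeasure μW d n with hμ
  have h1 : ∫ ω, (fun ω : GirgΩ d n => cnt S ω) ω ^ 2 ∂μ = ∑ p : (Fin k ↪ Fin n) × (Fin k ↪ Fin n), μ.real (restr p.1 ⁻¹' S ∩ restr p.2 ⁻¹' S) := by
    have : ∀ ω : GirgΩ d n, cnt S ω ^ 2 = ∑ p : (Fin k ↪ Fin n) × (Fin k ↪ Fin n),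
        Set.indicator (restr p.1 ⁻¹' S ∩ restr p.2 ⁻¹' S) (fun _ => (1:ℝ)) ω := by
      intro ω
      unfold cnt
      rw [sq, Finset.sum_mul_sum, ← Finset.univ_product_univ, Finset.sum_product]
      apply Finset.sum_congr rfl; intro u _
      apply Finset.sum_congr rfl; intro v _
      simp only [Set.indicator, Set.mem_inter_iff]
      split_ifs <;> simp_all
    simp_rw [this]
    rw [integral_finsetSum _ (fun p _ => (integrable_const (1:ℝ)).indicator ((restr_meas p.1 hS).inter (restr_meas p.2 hS)))]
    apply Finset.sum_congr rfl
    intro p _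
    rw [integral_indicator_const _ ((restr_meas p.1 hS).inter (restr_meas p.2 hS))]
    simp
  have h2 : ∑ p ∈ ndP k n, μ.real (restr p.1 ⁻¹' S ∩ restr p.2 ⁻¹' S) ≤ n * ((2 * k).factorial * Kc d R) := by
    have h := nd_bound μW hn hN hNn hR hS hSC
    have h' := ENNReal.toReal_mono (by
      refine ENNReal.mul_ne_top (by simp) (ENNReal.mul_ne_top (by simp) ENNReal.ofReal_ne_top)) h
    rw [ENNReal.toReal_sum (fun p _ => measure_ne_top _ _)] at h'
    simpa [ENNReal.toReal_mul, ENNReal.toReal_ofReal hKc, Measure.real] using h'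
  have h3 : ∀ p : (Fin k ↪ Fin n) × (Fin k ↪ Fin n), p ∉ ndP k n → μ.real (restr p.1 ⁻¹' S ∩ restr p.2 ⁻¹' S) = q * q := by
    rintro ⟨u, v⟩ hp
    simp only [ndP, Finset.mem_filter, Finset.mem_univ, true_and, not_not] at hp
    have h := (mp_restr_pair μW u v u.injective v.injective hp).measure_preimage (s := S ×ˢ S) (hS.prod hS).nullMeasurableSet
    rw [Measure.prod_prod] at h
    have h' : μ (restr u ⁻¹' S ∩ restr v ⁻¹' S) = girgMeasure μW d k S * girgMeasure μW d k S := h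
    simp only [Measure.real, h', ENNReal.toReal_mul, hq]
  have h4 : ∑ p ∈ (ndP k n)ᶜ, μ.real (restr p.1 ⁻¹' S ∩ restr p.2 ⁻¹' S) ≤ (n.descFactorial k * q) ^ 2 := by
    calc _ = ∑ p ∈ (ndP k n)ᶜ, q * q := Finset.sum_congr rfl fun p hp => h3 p (by simpa using hp)
      _ ≤ ∑ p : (Fin k ↪ Fin n) × (Fin k ↪ Fin n), q * q :=
          Finset.sum_le_sum_of_subset_of_nonneg (Finset.subset_univ _) (fun _ _ _ => mul_self_nonneg q)
      _ = _ := by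
          simp [Fintype.card_embedding_eq]; ring
  have h5 := Finset.sum_add_sum_compl (ndP k n) (fun p => μ.real (restr p.1 ⁻¹' S ∩ restr p.2 ⁻¹' S))
  have h6 : ∫ ω, ((fun ω : GirgΩ d n => cnt S ω) ^ 2) ω ∂μ = ∫ ω, (fun ω : GirgΩ d n => cnt S ω) ω ^ 2 ∂μ := rfl
  rw [h6, h1, ← h5]
  linarith

theorem edge_link {d n k : ℕ} {N γ μb : ℝ} (hNn : N ^ d = n) (ω : GirgΩ d n) (v : Fin k ↪ Fin n) (i j : Fin k) (hij : i ≠ j) :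
    girgEdge γ μb d n ω (v i) (v j) ↔
      (restr v ω).2.2 s(i, j) ≤ edgeF γ ((restr v ω).1 i * (restr v ω).1 j / μb) d (N * dist ((restr v ω).2.1 i) ((restr v ω).2.1 j)) := by
  have h : connProb γ μb d n ω.1 ω.2.1 (v i) (v j) =
      edgeF γ ((restr v ω).1 i * (restr v ω).1 j / μb) d (N * dist ((restr v ω).2.1 i) ((restr v ω).2.1 j)) := by
    unfold connProb edgeF restr
    dsimp only
    rw [mul_pow, hNn, div_div]
    rw [← mul_assoc, mul_comm μb]
  unfold girgEdge
  rw [h]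
  have hne : v i ≠ v j := fun h => hij (v.injective h)
  simp only [ne_eq, hne, not_false_eq_true, true_and]
  rfl

theorem count_aux {k n : ℕ} (P : (Fin k → Fin n) → Prop) [DecidablePred P] :
    ({v : Fin k → Fin n | Function.Injective v ∧ P v}.ncard : ℝ) =
      ∑ v : Fin k ↪ Fin n, if P v then (1:ℝ) else 0 := by
  have h : {v : Fin k → Fin n | Function.Injective v ∧ P v} =
      (fun v : Fin k ↪ Fin n => (v : Fin k → Fin n)) '' (↑(univ.filter fun v : Fin k ↪ Fin n => P v) : Set (Fin k ↪ Fin n)) := by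
    ext v
    simp only [Set.mem_ofPred_eq, Set.mem_image, Finset.coe_filter, Finset.mem_univ, true_and]
    constructor
    · rintro ⟨h1, h2⟩; exact ⟨⟨v, h1⟩, h2, rfl⟩
    · rintro ⟨u, h1, rfl⟩; exact ⟨u.injective, h1⟩
  rw [h, Set.ncard_image_of_injective _ DFunLike.coe_injective, Set.ncard_coe_finset]
  simp

theorem star_link {d n k : ℕ} {N γ μb : ℝ} (hNn : N ^ d = n) (s : StarKind) (H : SimpleGraph (Fin k)) (ω : GirgΩ d n) :
    (starNTotal s H γ μb d n ω : ℝ) = cnt (PatS s H γ μb d N) ω := by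
  classical
  unfold cnt
  cases s with
  | sub =>
    simp only [starNTotal, nSubTotal]
    rw [count_aux]
    apply Finset.sum_congr rfl
    intro v _
    simp only [Set.indicator]
    congr 1
    simp only [PatS, PatD, Set.mem_preimage, Set.mem_ofPred_eq, eq_iff_iff]
    exact forall_congr' fun i => forall_congr' fun j => forall_congr' fun h => edge_link hNn ω v i j h.ne
  | ind =>
    simp only [starNTotal, nIndTotal]
    rw [count_aux]
    apply Finset.sum_congr rfl
    intro v _
    simp only [Set.indicator]
    congr 1
    simp only [PatS, PatD, Set.mem_preimage, Set.mem_ofPred_eq, eq_iff_iff]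
    exact forall_congr' fun i => forall_congr' fun j => forall_congr' fun h => iff_congr Iff.rfl (edge_link hNn ω v i j h)

theorem cnt_split {d k n : ℕ} (S C : Set (GirgΩ d k)) (ω : GirgΩ d n) :
    cnt S ω = cnt (S ∩ C) ω + cnt (S \ C) ω := by
  classical
  unfold cnt
  rw [← Finset.sum_add_distrib]
  apply Finset.sum_congr rfl
  intro v _
  simp only [Set.indicator, Set.mem_preimage, Set.mem_inter_iff, Set.mem_sdiff]
  split_ifs <;> simp_all

theorem cnt_nonneg {d k n : ℕ} (S : Set (GirgΩ d k)) (ω : GirgΩ d n) : 0 ≤ cnt S ω :=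
  Finset.sum_nonneg fun _ _ => Set.indicator_nonneg (fun _ _ => zero_le_one) _

theorem cnt_meas {d k n : ℕ} {S : Set (GirgΩ d k)} (hS : MeasurableSet S) : Measurable (fun ω : GirgΩ d n => cnt S ω) := by
  unfold cnt
  exact Finset.measurable_sum _ fun v _ => measurable_const.indicator (restr_meas v hS)

/-- length scale -/
def Nn (d n : ℕ) : ℝ := (n:ℝ) ^ (1 / (d:ℝ))

theorem Nn_pos {d n : ℕ} (hn : 0 < n) : 0 < Nn d n := by unfold Nn; positivity

theorem Nn_pow {d n : ℕ} (hd : 1 ≤ d) : Nn d n ^ d = n := by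
  unfold Nn
  rw [← Real.rpow_natCast, ← Real.rpow_mul (by positivity), one_div_mul_cancel (by positivity), Real.rpow_one]

theorem Nn_tendsto {d : ℕ} (hd : 1 ≤ d) : Tendsto (fun n => Nn d n) atTop atTop := by
  unfold Nn
  exact (tendsto_rpow_atTop (by positivity)).comp tendsto_natCast_atTop_atTop

theorem far_prob {m d : ℕ} (hd : 1 ≤ d) {τ c γ μb : ℝ} (hγ : 1 < γ) (hμ : 0 < μb)
    (μW : Measure ℝ) [IsProbabilityMeasure μW] (hW : WeightTail τ c μW)
    (s : StarKind) (H : SimpleGraph (Fin (m+1)))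
    (σ : Equiv.Perm (Fin (m+1))) (hσ : ∀ i, H.Adj (σ i) (σ (i+1))) (R : ℕ) (hR : 0 < R) {n : ℕ} (hn : 0 < n) {t : ℝ} (ht : 0 < t) :
    girgMeasure μW d n {ω | n * t ≤ cnt (PatS s H γ μb d (Nn d n) \ ClS (m+1) d (Nn d n) R) ω} ≤
      epsR μW γ μb d σ R / ENNReal.ofReal t := by
  set S := (PatS s H γ μb d (Nn d n) \ ClS (m+1) d (Nn d n) R) with hSdef
  have hS : MeasurableSet S := (PatS_meas s H γ μb d _).diff (ClS_meas _ d _ R)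
  have hN := Nn_pos (d := d) hn
  have hn' : (0:ℝ) < n := by exact_mod_cast hn
  have h1 := meas_ge_le_lintegral_div (μ := girgMeasure μW d n) (f := fun ω => ENNReal.ofReal (cnt S ω))
    (cnt_meas hS).ennreal_ofReal.aemeasurable (ε := ENNReal.ofReal (n * t)) (by positivity) ENNReal.ofReal_ne_top
  rw [lcnt_mean μW hS] at h1
  have h2 := far_mass hd hγ hμ hN μW hW s H σ hσ R hR
  have h3 : (n.descFactorial (m+1) : ENNReal) * girgMeasure μW d (m+1) S ≤ n * epsR μW γ μb d σ R := by
    calc _ ≤ ((n ^ (m+1) : ℕ) : ENNReal) * girgMeasure μW d (m+1) S := by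
          gcongr; exact_mod_cast Nat.descFactorial_le_pow n (m+1)
      _ = n * (ENNReal.ofReal (Nn d n ^ (d * m)) * girgMeasure μW d (m+1) S) := by
          rw [pow_mul, Nn_pow hd, ENNReal.ofReal_pow (by positivity), ENNReal.ofReal_natCast, ← mul_assoc]
          congr 1
          push_cast; ring
      _ ≤ _ := by gcongr
  calc _ ≤ girgMeasure μW d n {ω | ENNReal.ofReal (n * t) ≤ ENNReal.ofReal (cnt S ω)} := by
        apply measure_mono
        intro ω hω
        exact ENNReal.ofReal_le_ofReal hω
    _ ≤ _ := h1
    _ ≤ (n * epsR μW γ μb d σ R) / ENNReal.ofReal (n * t) := by gcongr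
    _ = _ := by
        rw [ENNReal.ofReal_mul hn'.le, ENNReal.ofReal_natCast, ENNReal.mul_div_mul_left _ _ (by simpa using hn.ne') (by simp)]

theorem close_mean {m d : ℕ} (hd : 1 ≤ d) {γ μb : ℝ}
    (μW : Measure ℝ) [IsProbabilityMeasure μW]
    (s : StarKind) (H : SimpleGraph (Fin (m+1))) (R : ℕ) :
    Tendsto (fun n : ℕ => (∫ ω : GirgΩ d n, cnt (PatS s H γ μb d (Nn d n) ∩ ClS (m+1) d (Nn d n) R) ω ∂(girgMeasure μW d n)) / n)
      atTop (nhds (IR s H μW γ μb d R).toReal) := by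
  have h0 : Tendsto (fun n : ℕ => (n.descFactorial (m+1) : ℝ) / (n:ℝ) ^ (m+1)) atTop (nhds 1) := by
    have h := isEquivalent_descFactorial (m+1)
    rw [Asymptotics.isEquivalent_iff_tendsto_one] at h
    · exact h
    · filter_upwards [eventually_gt_atTop 0] with n hn
      have : (0:ℝ) < n := by exact_mod_cast hn
      positivity
  have h1 := h0.mul_const (IR s H μW γ μb d R).toReal
  rw [one_mul] at h1
  refine h1.congr' ?_
  filter_upwards [eventually_gt_atTop 0, (Nn_tendsto hd).eventually_gt_atTop (4 * (R:ℝ))] with n hn hNR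
  have hn' : (0:ℝ) < n := by exact_mod_cast hn
  have hN := Nn_pos (d := d) hn
  rw [cnt_mean μW ((PatS_meas s H γ μb d _).inter (ClS_meas _ d _ R)), ← close_mass hN hNR μW s H,
    ENNReal.toReal_mul, ENNReal.toReal_ofReal (by positivity), pow_mul, Nn_pow hd]
  unfold Measure.real
  field_simp
  ring

theorem close_prob {m d : ℕ} (hd : 1 ≤ d) {γ μb : ℝ}
    (μW : Measure ℝ) [IsProbabilityMeasure μW]
    (s : StarKind) (H : SimpleGraph (Fin (m+1))) (R : ℕ) {t : ℝ} (ht : 0 < t) :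
    Tendsto (fun n : ℕ => girgMeasure μW d n {ω : GirgΩ d n | n * t ≤ |cnt (PatS s H γ μb d (Nn d n) ∩ ClS (m+1) d (Nn d n) R) ω -
      ∫ ω : GirgΩ d n, cnt (PatS s H γ μb d (Nn d n) ∩ ClS (m+1) d (Nn d n) R) ω ∂(girgMeasure μW d n)|})
      atTop (nhds 0) := by
  set K : ℝ := (2 * (m+1)).factorial * Kc d R with hK
  have h0 : Tendsto (fun n : ℕ => ENNReal.ofReal (K / t ^ 2 / n)) atTop (nhds 0) := by
    rw [← ENNReal.ofReal_zero]
    exact ENNReal.tendsto_ofReal (tendsto_const_div_atTop_nhds_zero_nat _)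
  refine tendsto_of_tendsto_of_tendsto_of_le_of_le' tendsto_const_nhds h0 (Eventually.of_forall fun _ => zero_le) ?_
  filter_upwards [eventually_gt_atTop 0] with n hn
  have hn' : (0:ℝ) < n := by exact_mod_cast hn
  have hN := Nn_pos (d := d) hn
  have hS := (PatS_meas s H γ μb d (Nn d n)).inter (ClS_meas (m+1) d (Nn d n) R)
  refine (ProbabilityTheory.meas_ge_le_variance_div_sq (cnt_memLp μW hS) (show 0 < n * t by positivity)).trans ?_
  apply ENNReal.ofReal_le_ofReal
  have hv := cnt_var μW hn hN (Nn_pow hd) (Nat.cast_nonneg R) hS Set.inter_subset_right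
  calc _ ≤ (n * K) / (n * t) ^ 2 := by gcongr
    _ = _ := by field_simp

theorem main_conv {m d : ℕ} (hd : 1 ≤ d) {τ c γ : ℝ} (hτ : 2 < τ) (hγ : 1 < γ)
    (μW : Measure ℝ) [IsProbabilityMeasure μW] (hW : WeightTail τ c μW)
    (s : StarKind) (H : SimpleGraph (Fin (m+1)))
    (σ : Equiv.Perm (Fin (m+1))) (hσ : ∀ i, H.Adj (σ i) (σ (i+1))) (hm : 0 < m) (hk : ((m:ℝ)+1) * (3 - τ) < 2) :
    ∃ I : ℝ, 0 < I ∧ ∀ δ : ℝ, 0 < δ →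
      Tendsto (fun n : ℕ => girgMeasure μW d n
          {ω | δ < |(starNTotal s H γ (wMean μW) d n ω : ℝ) / n - I|})
        atTop (nhds 0) := by
  have hμ := wMean_pos hτ hW
  set μb := wMean μW with hμb
  set F : ℕ → ENNReal := fun R => IR s H μW γ μb d R with hF
  have hFm : Monotone F := fun a b h => IR_mono s H μW γ μb d (by exact_mod_cast h)
  have hFle : ∀ R, F R ≤ ∫⁻ w, Gm γ μb d m w ∂(Measure.pi fun _ => μW) := fun R => IR_le hd hγ hμ μW hW s H σ hσ R
  have hGm := Gm_int (γ := γ) (μb := μb) (d := d) μW hW hm hk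
  have hsup : (⨆ R, F R) ≠ ⊤ := ((iSup_le hFle).trans_lt hGm).ne
  obtain ⟨R0, hR0⟩ := IR_pos hd hγ hμ μW hW s H
  set I := (⨆ R, F R).toReal with hI
  have hI0 : 0 < I := ENNReal.toReal_pos (hR0.trans_le (le_iSup F R0)).ne' hsup
  have hIlim : Tendsto (fun R => (F R).toReal) atTop (nhds I) :=
    (ENNReal.tendsto_toReal hsup).comp (tendsto_atTop_iSup hFm)
  refine ⟨I, hI0, fun δ hδ => ?_⟩
  have hδ3 : 0 < δ / 3 := by positivity
  rw [ENNReal.tendsto_nhds_zero]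
  intro ε hε
  have hepsl : Tendsto (fun R => epsR μW γ μb d σ R / ENNReal.ofReal (δ / 3)) atTop (nhds 0) := by
    have := ENNReal.Tendsto.div_const (epsR_tendsto hd hγ hμ μW hW hm hk σ) (b := ENNReal.ofReal (δ / 3)) (Or.inr (by positivity))
    simpa using this
  have hε2 : 0 < ε / 2 := ENNReal.half_pos hε.ne'
  obtain ⟨R, hR1, hR2, hR⟩ := ((ENNReal.tendsto_nhds_zero.mp hepsl (ε / 2) hε2).and
    ((hIlim.eventually (Metric.ball_mem_nhds I hδ3)).and (eventually_gt_atTop 0))).exists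
  have hmean := (close_mean hd (γ := γ) (μb := μb) μW s H R).eventually (Metric.isOpen_ball.mem_nhds hR2)
  have hprob := ENNReal.tendsto_nhds_zero.mp (close_prob hd (γ := γ) (μb := μb) μW s H R hδ3) (ε / 2) hε2
  filter_upwards [hmean, hprob, eventually_gt_atTop 0] with n h1 h2 hn
  have hn' : (0:ℝ) < n := by exact_mod_cast hn
  have h3 := far_prob hd hγ hμ μW hW s H σ hσ R hR hn hδ3
  refine le_trans (measure_mono ?_) ((measure_union_le _ _).trans ((add_le_add h2 (h3.trans hR1)).trans (ENNReal.add_halves ε).le))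
  intro ω hω
  by_contra hcon
  simp only [Set.mem_union, Set.mem_ofPred_eq, not_or, not_le] at hcon hω
  obtain ⟨hc1, hc2⟩ := hcon
  rw [star_link (Nn_pow hd) s H ω, cnt_split _ (ClS (m+1) d (Nn d n) R) ω] at hω
  set T := cnt (PatS s H γ μb d (Nn d n) ∩ ClS (m+1) d (Nn d n) R) ω
  have hU0 := cnt_nonneg (PatS s H γ μb d (Nn d n) \ ClS (m+1) d (Nn d n) R) ω
  set U := cnt (PatS s H γ μb d (Nn d n) \ ClS (m+1) d (Nn d n) R) ω
  set E := ∫ ω : GirgΩ d n, cnt (PatS s H γ μb d (Nn d n) ∩ ClS (m+1) d (Nn d n) R) ω ∂(girgMeasure μW d n)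
  rw [Real.dist_eq] at h1
  have e1 : |(T - E) / n| < δ / 3 := by
    rw [abs_div, abs_of_pos hn', div_lt_iff₀ hn']; linarith
  have e2 : |U / n| < δ / 3 := by
    rw [abs_div, abs_of_pos hn', abs_of_nonneg hU0, div_lt_iff₀ hn']; linarith
  have e3 : (T + U) / n - I = (T - E) / n + (E / n - I) + U / n := by field_simp; ring
  rw [e3] at hω
  have e4 := abs_add_three ((T - E) / n) (E / n - I) (U / n)
  linarith

/-- Theorem `hamiltonian`(i), geometric regime: for a Hamiltonian
pattern `H` of size `k < 1 + 1/(3-τ)`, the vector `(α,β) ≡ (0, -1/d)` solves the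
optimization problem and `N^⋆(H)/n` converges in probability to a positive constant. -/
theorem girg_hamiltonian_geometric_phase
    {k d : ℕ} [NeZero k] (hd : 1 ≤ d) (τ γ c : ℝ) (hτ : τ ∈ Set.Ioo (2:ℝ) 3) (hγ : 1 < γ)
    (μW : Measure ℝ) [IsProbabilityMeasure μW] (hW : WeightTail τ c μW)
    (H : SimpleGraph (Fin k)) (hH : IsHamiltonianPattern H)
    (hk : (k : ℝ) < 1 + 1 / (3 - τ)) (s : StarKind) :
    starIsOptimal s τ γ d H (fun _ => 0) (fun _ _ => -(1 / (d : ℝ))) ∧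
    ∃ I : ℝ, 0 < I ∧ ∀ δ : ℝ, 0 < δ →
      Tendsto (fun n : ℕ => girgMeasure μW d n
          {ω | δ < |(starNTotal s H γ (wMean μW) d n ω : ℝ) / n - I|})
        atTop (nhds 0) := by
  obtain ⟨m, rfl⟩ := Nat.exists_eq_succ_of_ne_zero (NeZero.ne k)
  obtain ⟨σ, hσ⟩ := hH
  have hσ2 : ∀ i : Fin (m+1), H.Adj (σ i) (σ (i+1)) := fun i => hσ i
  have hm : 0 < m := by
    rcases Nat.eq_zero_or_pos m with h | h
    · subst h
      have h0 := hσ2 0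
      have : σ (0 : Fin 1) = σ ((0 : Fin 1) + 1) := rfl
      exact absurd this h0.ne
    · exact h
  have h3 : 0 < 3 - τ := by linarith [hτ.2]
  have hk2 : ((m:ℝ)+1) * (3 - τ) < 2 := by
    have e : (1 + 1 / (3 - τ)) * (3 - τ) = (3 - τ) + 1 := by field_simp
    have := mul_lt_mul_of_pos_right hk h3
    rw [e] at this
    push_cast at this
    linarith [hτ.1]
  exact ⟨ham_opt hd hτ hγ H σ hσ2 hk2.le s, main_conv hd hτ.1 hγ μW hW s H σ hσ2 hm hk2⟩

end
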